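/- Liouville theorem: let M_a be a weighted partial trace operator of class 𝒜. If u is an entire viscosity solution of M_a(D²u) = 0 on all of ℝⁿ which is bounded above or bounded below, then u is constant. -/

import Mathlib

open Set Metric MeasureTheory Filter

noncomputable section

/-- Euclidean `n`-space `ℝⁿ`. -/
abbrev En (n : ℕ) : Type := EuclideanSpace ℝ (Fin n)

/-- The eigenvalues of a (symmetric) matrix, arranged in nondecreasing order. -/
noncomputable def sortedEig {n : ℕ} (X : Matrix (Fin n) (Fin n) ℝ) : Fin n → ℝ :=
  if hX : X.IsHermitian then fun i => hX.eigenvalues (Tuple.sort hX.eigenvalues i) else 0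

/-- The weighted partial trace operator `M_a(X) = Σ a_i λ_i(X)`. -/
noncomputable def Ma {n : ℕ} (a : Fin n → ℝ) (X : Matrix (Fin n) (Fin n) ℝ) : ℝ :=
  ∑ i, a i * sortedEig X i

/-- The last index of `Fin n`. -/
def lastIdx (n : ℕ) [NeZero n] : Fin n :=
  ⟨n - 1, Nat.sub_lt (Nat.pos_of_ne_zero (NeZero.ne n)) Nat.one_pos⟩

/-- The class 𝒜̄ : all weights nonnegative, some weight positive. -/
def ClassAbar {n : ℕ} (a : Fin n → ℝ) : Prop := (∀ i, 0 ≤ a i) ∧ ∃ i, 0 < a i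

/-- The class 𝒜 : nonnegative weights with `a 1 > 0` and `a n > 0`. -/
def ClassA {n : ℕ} [NeZero n] (a : Fin n → ℝ) : Prop :=
  (∀ i, 0 ≤ a i) ∧ 0 < a 0 ∧ 0 < a (lastIdx n)

/-- The class 𝒜₁ : nonnegative weights with `a 1 > 0`. -/
def ClassA1 {n : ℕ} [NeZero n] (a : Fin n → ℝ) : Prop := (∀ i, 0 ≤ a i) ∧ 0 < a 0

/-- The class 𝒜ₙ : nonnegative weights with `a n > 0`. -/
def ClassAn {n : ℕ} [NeZero n] (a : Fin n → ℝ) : Prop :=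
  (∀ i, 0 ≤ a i) ∧ 0 < a (lastIdx n)

/-- `a* = min (a 1) (a n)`. -/
noncomputable def aStar {n : ℕ} [NeZero n] (a : Fin n → ℝ) : ℝ := min (a 0) (a (lastIdx n))

/-- `â_j = (a 1 + ⋯ + a n) - a j`. -/
noncomputable def hatA {n : ℕ} (a : Fin n → ℝ) (j : Fin n) : ℝ := (∑ i, a i) - a j

/-- The Hessian matrix of `φ` at `x`. -/
noncomputable def hess {n : ℕ} (φ : En n → ℝ) (x : En n) : Matrix (Fin n) (Fin n) ℝ :=
  fun i j => iteratedFDeriv ℝ 2 φ x ![EuclideanSpace.single i 1, EuclideanSpace.single j 1]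

/-- The Hessian matrix of `φ` at `x`, with derivatives taken within `Ω`. -/
noncomputable def hessOn {n : ℕ} (Ω : Set (En n)) (φ : En n → ℝ) (x : En n) :
    Matrix (Fin n) (Fin n) ℝ :=
  fun i j =>
    iteratedFDerivWithin ℝ 2 φ Ω x ![EuclideanSpace.single i 1, EuclideanSpace.single j 1]

/-- `u` is a viscosity subsolution of `M_a(D²u) = f` in `Ω`. -/
def IsViscSubsol {n : ℕ} (a : Fin n → ℝ) (Ω : Set (En n)) (f u : En n → ℝ) : Prop :=
  ∀ x₀ ∈ Ω, ∀ φ : En n → ℝ, ContDiff ℝ 2 φ →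
    IsLocalMaxOn (fun x => u x - φ x) Ω x₀ → f x₀ ≤ Ma a (hess φ x₀)

/-- `u` is a viscosity supersolution of `M_a(D²u) = f` in `Ω`. -/
def IsViscSupersol {n : ℕ} (a : Fin n → ℝ) (Ω : Set (En n)) (f u : En n → ℝ) : Prop :=
  ∀ x₀ ∈ Ω, ∀ φ : En n → ℝ, ContDiff ℝ 2 φ →
    IsLocalMinOn (fun x => u x - φ x) Ω x₀ → Ma a (hess φ x₀) ≤ f x₀

/-- `u` is a (continuous) viscosity solution of `M_a(D²u) = f` in `Ω`. -/
def IsViscSolution {n : ℕ} (a : Fin n → ℝ) (Ω : Set (En n)) (f u : En n → ℝ) : Prop :=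
  ContinuousOn u Ω ∧ IsViscSubsol a Ω f u ∧ IsViscSupersol a Ω f u

/-- The `L^p` norm of `f` on `D`. -/
noncomputable def lpNormOn {n : ℕ} (p : ℝ) (D : Set (En n)) (f : En n → ℝ) : ℝ :=
  (∫ x in D, |f x| ^ p) ^ (1 / p)

/-- The sup norm of `f` on `D`. -/
noncomputable def supAbsOn {n : ℕ} (D : Set (En n)) (f : En n → ℝ) : ℝ :=
  sSup ((fun x => |f x|) '' D)

/-- The Hölder seminorm `[h]_{β,D}`. -/
noncomputable def holderSemi {n : ℕ} (β : ℝ) (D : Set (En n)) (h : En n → ℝ) : ℝ :=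
  sSup {r | ∃ x ∈ D, ∃ y ∈ D, x ≠ y ∧ r = |h x - h y| / ‖x - y‖ ^ β}

/-- The Hölder norm `‖g‖_{C^β(D)} = sup_D |g| + [g]_{β,D}`. -/
noncomputable def cBetaNorm {n : ℕ} (β : ℝ) (D : Set (En n)) (g : En n → ℝ) : ℝ :=
  supAbsOn D g + holderSemi β D g

/-- `g` is `β`-Hölder continuous on `D`. -/
def HolderOn {n : ℕ} (β : ℝ) (D : Set (En n)) (g : En n → ℝ) : Prop :=
  ∃ K : ℝ, ∀ x ∈ D, ∀ y ∈ D, |g x - g y| ≤ K * ‖x - y‖ ^ β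

/-- The `C^{1,β}(D)` norm: `sup|g| + sup|Dg| + [Dg]_{β,D}`. -/
noncomputable def c1BetaNorm {n : ℕ} (β : ℝ) (D : Set (En n)) (g : En n → ℝ) : ℝ :=
  supAbsOn D g + sSup ((fun x => ‖fderiv ℝ g x‖) '' D) +
    sSup {r | ∃ x ∈ D, ∃ y ∈ D, x ≠ y ∧ r = ‖fderiv ℝ g x - fderiv ℝ g y‖ / ‖x - y‖ ^ β}

/-- `g ∈ C^{1,β}(D)`: differentiable with `β`-Hölder derivative on `D`. -/
def C1HolderOn {n : ℕ} (β : ℝ) (D : Set (En n)) (g : En n → ℝ) : Prop :=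
  ContDiff ℝ 1 g ∧ ∃ K : ℝ, ∀ x ∈ D, ∀ y ∈ D,
    ‖fderiv ℝ g x - fderiv ℝ g y‖ ≤ K * ‖x - y‖ ^ β

/-- Uniform exterior sphere condition with radius `R`: every boundary point lies on the
boundary of a closed ball of radius `R` containing `Ω̄`. -/
def ExtSphere {n : ℕ} (Ω : Set (En n)) (R : ℝ) : Prop :=
  ∀ y ∈ frontier Ω, ∃ z : En n, dist y z = R ∧ closure Ω ⊆ closedBall z R

/-- The cone `Σ_θ = {x : xₙ ≥ |x| cos θ}`. -/
def coneSet (n : ℕ) [NeZero n] (θ : ℝ) : Set (En n) := {x | ‖x‖ * Real.cos θ ≤ x (lastIdx n)}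

/-- Uniform exterior cone condition. -/
def ExtCone {n : ℕ} [NeZero n] (Ω : Set (En n)) : Prop :=
  ∃ θ₀ ∈ Set.Ioo (0 : ℝ) Real.pi, ∃ r₀ > (0 : ℝ), ∀ y ∈ frontier Ω,
    ∃ O : En n ≃ₗᵢ[ℝ] En n,
      closure Ω ∩ ball y r₀ ⊆ (fun x => y + O x) '' coneSet n θ₀

/-- Uniform Lipschitz boundary with Lipschitz constant `L`: near each boundary point, in
suitable rotated coordinates, `Ω` is the region above the graph of an `L`-Lipschitz
function. -/
def LipschitzBoundary {n : ℕ} [NeZero n] (Ω : Set (En n)) (L : ℝ) : Prop :=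
  ∃ r₀ > (0 : ℝ), ∀ y ∈ frontier Ω, ∃ O : En n ≃ₗᵢ[ℝ] En n, ∃ ψ : En n → ℝ,
    LipschitzWith (Real.toNNReal L) ψ ∧
    ∀ x ∈ ball (0 : En n) r₀,
      (y + O x ∈ Ω ↔ ψ (x - EuclideanSpace.single (lastIdx n) (x (lastIdx n))) < x (lastIdx n))

/-- The open cube of edge `ℓ` centered at the origin. -/
def cube (n : ℕ) (ℓ : ℝ) : Set (En n) := {x | ∀ i, |x i| < ℓ / 2}

/-- The upper concave envelope of `u` in `Ω`: the smallest concave function `≥ u` in `Ω`. -/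
noncomputable def upperEnvelope {n : ℕ} (Ω : Set (En n)) (u : En n → ℝ) : En n → ℝ :=
  fun x => sInf {t | ∃ φ : En n → ℝ, ConcaveOn ℝ Ω φ ∧ (∀ z ∈ Ω, u z ≤ φ z) ∧ t = φ x}

/-- The lower convex envelope of `u` in `Ω`: the largest convex function `≤ u` in `Ω`. -/
noncomputable def lowerEnvelope {n : ℕ} (Ω : Set (En n)) (u : En n → ℝ) : En n → ℝ :=
  fun x => sSup {t | ∃ φ : En n → ℝ, ConvexOn ℝ Ω φ ∧ (∀ z ∈ Ω, φ z ≤ u z) ∧ t = φ x}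

end

/-!
After adding a constant and possibly replacing `u` by `-u` (and the weights by their reversal),
suppose `u ≥ 1`. Then `log u` solves an equation with an additional quadratic gradient term. Double
the variables: if `log u x - log u y - L (‖x - y‖ / (1 - ‖x‖ ^ 2)) ^ (1 / 8)` were positive
somewhere with `‖x‖ < 1`, the theorem on sums would give second-order jets near an interior maximum,
ordered by the Hessian of the penalty. The gradient term bounds the penalty there by a constant,
so for large `L` the quotient `‖x - y‖ / (1 - ‖x‖ ^ 2)` is small, and so are the error terms it
causes. The concavity of the power `1 / 8` in the direction `x - y` then separates the lowest or the
highest eigenvalues of the two jets, the other ones being ordered up to the error, which is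
impossible since `a₁` and `aₙ` are both positive. As `L` does not depend on `u`, the resulting
Hölder estimate applies to all the rescalings `u (R • ·)`, and `R → ∞` shows that `u` is constant.
-/

open scoped InnerProductSpace NNReal Topology

section Eigenvalues

variable {n : ℕ}

/-- The matrix of a bilinear form on `ℝⁿ` in the standard basis. Second derivatives are handled
as bilinear forms throughout, and enter `Ma` through this matrix. -/
noncomputable def formMatrix (B : En n →L[ℝ] En n →L[ℝ] ℝ) : Matrix (Fin n) (Fin n) ℝ :=
  fun i j => B (EuclideanSpace.single i 1) (EuclideanSpace.single j 1)

lemma hess_eq_formMatrix (φ : En n → ℝ) (x : En n) :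
    hess φ x = formMatrix (fderiv ℝ (fderiv ℝ φ) x) := by
  ext i j
  simp [hess, formMatrix, iteratedFDeriv_two_apply]

lemma isHermitian_formMatrix {B : En n →L[ℝ] En n →L[ℝ] ℝ} (hB : ∀ u v, B u v = B v u) :
    (formMatrix B).IsHermitian := by
  ext i j
  simp [formMatrix, hB (EuclideanSpace.single j 1)]

lemma formMatrix_mulVec (B : En n →L[ℝ] En n →L[ℝ] ℝ) (v : En n) (i : Fin n) :
    (formMatrix B).mulVec v i = B (EuclideanSpace.single i 1) v := by
  have hv : v = ∑ j, v j • EuclideanSpace.single j (1 : ℝ) := by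
    simpa using ((EuclideanSpace.basisFun (Fin n) ℝ).sum_repr v).symm
  conv_rhs => rw [hv]
  simp [Matrix.mulVec, dotProduct, formMatrix, mul_comm]

lemma exists_eigenbasis {B : En n →L[ℝ] En n →L[ℝ] ℝ} (hB : ∀ u v, B u v = B v u) :
    ∃ b : OrthonormalBasis (Fin n) ℝ (En n),
      ∀ i v, B (b i) v = sortedEig (formMatrix B) i * ⟪b i, v⟫_ℝ := by
  have hX := isHermitian_formMatrix hB
  let σ := Tuple.sort hX.eigenvalues
  refine ⟨hX.eigenvectorBasis.reindex σ.symm, fun i v => ?_⟩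
  have hbasis : ∀ j, B (hX.eigenvectorBasis (σ i)) (EuclideanSpace.single j 1) =
      hX.eigenvalues (σ i) * hX.eigenvectorBasis (σ i) j := fun j => by
    rw [hB, ← formMatrix_mulVec]
    exact congrFun (hX.mulVec_eigenvectorBasis (σ i)) j
  have hv : v = ∑ j, v j • EuclideanSpace.single j (1 : ℝ) := by
    simpa using ((EuclideanSpace.basisFun (Fin n) ℝ).sum_repr v).symm
  rw [sortedEig, dif_pos hX, OrthonormalBasis.reindex_apply, Equiv.symm_symm]
  conv_lhs => rw [hv]
  simp only [map_sum, map_smul, smul_eq_mul, hbasis, PiLp.inner_apply, Finset.mul_sum]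
  refine Finset.sum_congr rfl fun j _ => ?_
  simp [σ]; ring

lemma sortedEig_mono {X : Matrix (Fin n) (Fin n) ℝ} : Monotone (sortedEig X) := by
  by_cases hX : X.IsHermitian
  · rw [sortedEig, dif_pos hX]
    exact Tuple.monotone_sort hX.eigenvalues
  · rw [sortedEig, dif_neg hX]
    exact monotone_const

lemma apply_self_eq_sum {ι E : Type*} [Fintype ι] [NormedAddCommGroup E] [InnerProductSpace ℝ E]
    {B : E →L[ℝ] E →L[ℝ] ℝ} {b : OrthonormalBasis ι ℝ E} {μ : ι → ℝ}
    (hb : ∀ i v, B (b i) v = μ i * ⟪b i, v⟫_ℝ) (v : E) :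
    B v v = ∑ i, μ i * ⟪b i, v⟫_ℝ ^ 2 := by
  calc B v v = B (∑ i, ⟪b i, v⟫_ℝ • b i) v := by rw [b.sum_repr' v]
    _ = ∑ i, ⟪b i, v⟫_ℝ * B (b i) v := by simp [map_sum, sum_apply]
    _ = _ := Finset.sum_congr rfl fun i _ => by rw [hb]; ring

lemma exists_submodule_inner_eq_zero {ι E : Type*} [Fintype ι] [NormedAddCommGroup E]
    [InnerProductSpace ℝ E] (b : OrthonormalBasis ι ℝ E) (s : Finset ι) :
    ∃ U : Submodule ℝ E, Module.finrank ℝ U = s.card ∧ ∀ v ∈ U, ∀ j ∉ s, ⟪b j, v⟫_ℝ = 0 := by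
  refine ⟨Submodule.span ℝ (range (b ∘ ((↑) : s → ι))), ?_, fun v hv j hj => ?_⟩
  · rw [finrank_span_eq_card (b.orthonormal.linearIndependent.comp _ Subtype.val_injective)]
    simp
  · induction hv using Submodule.span_induction with
    | mem x hx =>
      obtain ⟨i, rfl⟩ := hx
      exact b.orthonormal.2 fun h => hj (h ▸ i.2)
    | zero => simp
    | add x y _ _ hx hy => rw [inner_add_right, hx, hy, add_zero]
    | smul c x _ hx => rw [inner_smul_right, hx, mul_zero]

section MinMax

variable {B C : En n →L[ℝ] En n →L[ℝ] ℝ}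

lemma exists_finrank_eq_apply_self_le (hB : ∀ u v, B u v = B v u) (i : Fin n) :
    ∃ U : Submodule ℝ (En n), Module.finrank ℝ U = i + 1 ∧
      ∀ v ∈ U, B v v ≤ sortedEig (formMatrix B) i * ‖v‖ ^ 2 := by
  obtain ⟨b, hb⟩ := exists_eigenbasis hB
  obtain ⟨U, hU, horth⟩ := exists_submodule_inner_eq_zero b (Finset.Iic i)
  refine ⟨U, by simp [hU], fun v hv => ?_⟩
  rw [apply_self_eq_sum hb, ← b.sum_sq_inner_right v, Finset.mul_sum]
  refine Finset.sum_le_sum fun j _ => ?_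
  by_cases hj : j ∈ Finset.Iic i
  · exact mul_le_mul_of_nonneg_right (sortedEig_mono (Finset.mem_Iic.1 hj)) (sq_nonneg _)
  · simp [horth v hv j hj]

lemma exists_finrank_eq_le_apply_self (hB : ∀ u v, B u v = B v u) (i : Fin n) :
    ∃ U : Submodule ℝ (En n), Module.finrank ℝ U = n - i ∧
      ∀ v ∈ U, sortedEig (formMatrix B) i * ‖v‖ ^ 2 ≤ B v v := by
  obtain ⟨b, hb⟩ := exists_eigenbasis hB
  obtain ⟨U, hU, horth⟩ := exists_submodule_inner_eq_zero b (Finset.Ici i)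
  refine ⟨U, by simp [hU], fun v hv => ?_⟩
  rw [apply_self_eq_sum hb, ← b.sum_sq_inner_right v, Finset.mul_sum]
  refine Finset.sum_le_sum fun j _ => ?_
  by_cases hj : j ∈ Finset.Ici i
  · exact mul_le_mul_of_nonneg_right (sortedEig_mono (Finset.mem_Ici.1 hj)) (sq_nonneg _)
  · simp [horth v hv j hj]

lemma exists_ne_zero_mem_mem {E : Type*} [AddCommGroup E] [Module ℝ E] [FiniteDimensional ℝ E]
    {U V : Submodule ℝ E}
    (h : Module.finrank ℝ E < Module.finrank ℝ U + Module.finrank ℝ V) :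
    ∃ v ∈ U, v ∈ V ∧ v ≠ 0 := by
  have hmeet : ¬Disjoint U V := fun hd =>
    h.not_ge (Submodule.finrank_add_finrank_le_of_disjoint hd)
  simpa [Submodule.disjoint_def] using hmeet

lemma le_sortedEig_of_submodule (hB : ∀ u v, B u v = B v u) {i : Fin n} {U : Submodule ℝ (En n)}
    (hU : Module.finrank ℝ U = n - i) {t : ℝ} (ht : ∀ v ∈ U, t * ‖v‖ ^ 2 ≤ B v v) :
    t ≤ sortedEig (formMatrix B) i := by
  obtain ⟨V, hV, hVle⟩ := exists_finrank_eq_apply_self_le hB i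
  obtain ⟨v, hvU, hvV, hv⟩ := exists_ne_zero_mem_mem (U := U) (V := V) <| by
    rw [hU, hV, finrank_euclideanSpace_fin]
    omega
  exact le_of_mul_le_mul_right ((ht v hvU).trans (hVle v hvV)) (by positivity)

lemma sortedEig_le_of_submodule (hB : ∀ u v, B u v = B v u) {i : Fin n} {U : Submodule ℝ (En n)}
    (hU : Module.finrank ℝ U = i + 1) {t : ℝ} (ht : ∀ v ∈ U, B v v ≤ t * ‖v‖ ^ 2) :
    sortedEig (formMatrix B) i ≤ t := by
  obtain ⟨V, hV, hleV⟩ := exists_finrank_eq_le_apply_self hB i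
  obtain ⟨v, hvU, hvV, hv⟩ := exists_ne_zero_mem_mem (U := U) (V := V) <| by
    rw [hU, hV, finrank_euclideanSpace_fin]
    omega
  exact le_of_mul_le_mul_right ((hleV v hvV).trans (ht v hvU)) (by positivity)

lemma sortedEig_le_add (hB : ∀ u v, B u v = B v u) (hC : ∀ u v, C u v = C v u) {c : ℝ}
    (h : ∀ v, B v v ≤ C v v + c * ‖v‖ ^ 2) (i : Fin n) :
    sortedEig (formMatrix B) i ≤ sortedEig (formMatrix C) i + c := by
  obtain ⟨U, hU, hle⟩ := exists_finrank_eq_le_apply_self hB i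
  rw [← sub_le_iff_le_add]
  refine le_sortedEig_of_submodule hC hU fun v hv => ?_
  linarith [hle v hv, h v]

lemma exists_norm_eq_one_apply_self_eq (hB : ∀ u v, B u v = B v u) (i : Fin n) :
    ∃ v, ‖v‖ = 1 ∧ B v v = sortedEig (formMatrix B) i := by
  obtain ⟨b, hb⟩ := exists_eigenbasis hB
  exact ⟨b i, b.norm_eq_one i, by simp [hb]⟩

lemma sortedEig_le (hB : ∀ u v, B u v = B v u) {t : ℝ} (h : ∀ v, B v v ≤ t * ‖v‖ ^ 2)
    (i : Fin n) : sortedEig (formMatrix B) i ≤ t := by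
  obtain ⟨v, hv, hBv⟩ := exists_norm_eq_one_apply_self_eq hB i
  simpa [hv, hBv] using h v

lemma le_sortedEig (hB : ∀ u v, B u v = B v u) {t : ℝ} (h : ∀ v, t * ‖v‖ ^ 2 ≤ B v v)
    (i : Fin n) : t ≤ sortedEig (formMatrix B) i := by
  obtain ⟨v, hv, hBv⟩ := exists_norm_eq_one_apply_self_eq hB i
  simpa [hv, hBv] using h v

lemma sortedEig_zero_le [NeZero n] (hB : ∀ u v, B u v = B v u) {e : En n} (he : ‖e‖ = 1) :
    sortedEig (formMatrix B) 0 ≤ B e e := by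
  obtain ⟨U, hU, hle⟩ := exists_finrank_eq_le_apply_self hB 0
  have htop : U = ⊤ := Submodule.eq_top_of_finrank_eq (by simp [hU])
  simpa [he] using hle e (htop ▸ Submodule.mem_top)

lemma le_sortedEig_lastIdx [NeZero n] (hB : ∀ u v, B u v = B v u) {e : En n} (he : ‖e‖ = 1) :
    B e e ≤ sortedEig (formMatrix B) (lastIdx n) := by
  obtain ⟨U, hU, hle⟩ := exists_finrank_eq_apply_self_le hB (lastIdx n)
  have htop : U = ⊤ := Submodule.eq_top_of_finrank_eq <| by
    have := NeZero.pos n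
    simp only [hU, lastIdx, finrank_euclideanSpace_fin]
    omega
  simpa [he] using hle e (htop ▸ Submodule.mem_top)

lemma sortedEig_smul (hB : ∀ u v, B u v = B v u) {c : ℝ} (hc : 0 ≤ c) (i : Fin n) :
    sortedEig (formMatrix (c • B)) i = c * sortedEig (formMatrix B) i := by
  have hB' : ∀ u v, (c • B) u v = (c • B) v u := fun u v => by simp [hB u v]
  obtain ⟨U, hU, hUle⟩ := exists_finrank_eq_apply_self_le hB i
  obtain ⟨V, hV, hleV⟩ := exists_finrank_eq_le_apply_self hB i
  refine le_antisymm (sortedEig_le_of_submodule hB' hU fun v hv => ?_)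
    (le_sortedEig_of_submodule hB' hV fun v hv => ?_)
  · simpa [mul_assoc] using mul_le_mul_of_nonneg_left (hUle v hv) hc
  · simpa [mul_assoc] using mul_le_mul_of_nonneg_left (hleV v hv) hc

lemma sortedEig_neg (hB : ∀ u v, B u v = B v u) (i : Fin n) :
    sortedEig (formMatrix (-B)) i = -sortedEig (formMatrix B) i.rev := by
  have hB' : ∀ u v, (-B) u v = (-B) v u := fun u v => by simp [hB u v]
  obtain ⟨U, hU, hUle⟩ := exists_finrank_eq_apply_self_le hB i.rev
  obtain ⟨V, hV, hleV⟩ := exists_finrank_eq_le_apply_self hB i.rev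
  refine le_antisymm
    (sortedEig_le_of_submodule hB' (by rw [hV, Fin.val_rev]; omega) fun v hv => ?_)
    (le_sortedEig_of_submodule hB' (by rw [hU, Fin.val_rev]; omega) fun v hv => ?_)
  · simpa using hleV v hv
  · simpa using hUle v hv

end MinMax

section Ma

variable {a : Fin n → ℝ} {B C : En n →L[ℝ] En n →L[ℝ] ℝ}

lemma Ma_formMatrix_smul (a : Fin n → ℝ) (hB : ∀ u v, B u v = B v u) {c : ℝ} (hc : 0 ≤ c) :
    Ma a (formMatrix (c • B)) = c * Ma a (formMatrix B) := by
  simp only [Ma, sortedEig_smul hB hc, Finset.mul_sum, mul_left_comm]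

lemma Ma_formMatrix_neg (a : Fin n → ℝ) (hB : ∀ u v, B u v = B v u) :
    Ma a (formMatrix (-B)) = -Ma (a ∘ Fin.rev) (formMatrix B) := by
  simp only [Ma, sortedEig_neg hB, mul_neg, Finset.sum_neg_distrib]
  rw [← Equiv.sum_comp Fin.revPerm]
  simp

lemma Ma_formMatrix_le (ha : ∀ i, 0 ≤ a i) (hB : ∀ u v, B u v = B v u)
    (hC : ∀ u v, C u v = C v u) {c : ℝ} (h : ∀ v, B v v ≤ C v v + c * ‖v‖ ^ 2) :
    Ma a (formMatrix B) ≤ Ma a (formMatrix C) + c * ∑ i, a i := by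
  rw [Ma, Ma, Finset.mul_sum, ← Finset.sum_add_distrib]
  refine Finset.sum_le_sum fun i _ => ?_
  linarith [mul_le_mul_of_nonneg_left (sortedEig_le_add hB hC h i) (ha i)]

lemma Ma_formMatrix_add_gap_le (ha : ∀ i, 0 ≤ a i) (hB : ∀ u v, B u v = B v u)
    (hC : ∀ u v, C u v = C v u) {c : ℝ} (hc : 0 ≤ c) (h : ∀ v, B v v ≤ C v v + c * ‖v‖ ^ 2)
    {j : Fin n} {g : ℝ}
    (hg : sortedEig (formMatrix B) j + g ≤ sortedEig (formMatrix C) j) :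
    Ma a (formMatrix B) + a j * g ≤ Ma a (formMatrix C) + c * ∑ i, a i := by
  have hterm : ∀ i, a i * sortedEig (formMatrix B) i + (if i = j then a j * g else 0) ≤
      a i * sortedEig (formMatrix C) i + c * a i := by
    intro i
    split_ifs with hij
    · subst hij
      linarith [mul_le_mul_of_nonneg_left hg (ha i), mul_nonneg hc (ha i)]
    · linarith [mul_le_mul_of_nonneg_left (sortedEig_le_add hB hC h i) (ha i)]
  simpa [Ma, Finset.sum_add_distrib, Finset.mul_sum] using
    Finset.sum_le_sum fun i (_ : i ∈ Finset.univ) => hterm i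

end Ma

end Eigenvalues

section Superjets

variable {E : Type*} [NormedAddCommGroup E] [NormedSpace ℝ E]
  {w : E → ℝ} {x : E} {p : E →L[ℝ] ℝ} {X : E →L[ℝ] E →L[ℝ] ℝ}

/-- `(p, X)` is a second-order superjet of `w` at `x`. The remainder `o(‖h‖²)` is only asked to be
bounded above, and is written with explicit constants. Subjets of `w` are handled as superjets
of `-w`. -/
structure IsSuperjet (w : E → ℝ) (x : E) (p : E →L[ℝ] ℝ) (X : E →L[ℝ] E →L[ℝ] ℝ) : Prop where
  symm : ∀ u v, X u v = X v u
  eventually_le : ∀ η > 0, ∀ᶠ h in 𝓝 (0 : E), w (x + h) ≤ w x + p h + 1 / 2 * X h h + η * ‖h‖ ^ 2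

omit [NormedSpace ℝ E] in
lemma eventually_nhds_zero_add {q : E → Prop} (h : ∀ᶠ z in 𝓝 x, q z) :
    ∀ᶠ v in 𝓝 (0 : E), q (x + v) :=
  (Continuous.tendsto' (by fun_prop) 0 x (add_zero x)).eventually h

lemma IsSuperjet.congr (hw : IsSuperjet w x p X) {w' : E → ℝ} (h : w =ᶠ[𝓝 x] w') :
    IsSuperjet w' x p X where
  symm := hw.symm
  eventually_le η hη := by
    filter_upwards [hw.eventually_le η hη, eventually_nhds_zero_add h] with v hv hv'
    rwa [← hv', ← h.self_of_nhds]

lemma eventually_sq_add_quadratic_le (p : E →L[ℝ] ℝ) (X : E →L[ℝ] E →L[ℝ] ℝ) {δ ε : ℝ}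
    (hε : 0 < ε) :
    ∀ᶠ h in 𝓝 (0 : E), |(p h + (1 / 2 * X h h + δ * ‖h‖ ^ 2)) ^ 2 - p h ^ 2| ≤ ε * ‖h‖ ^ 2 := by
  have hlim : Tendsto (fun h : E => (‖X‖ + |δ|) * |2 * p h + (1 / 2 * X h h + δ * ‖h‖ ^ 2)|)
      (𝓝 0) (𝓝 0) := Continuous.tendsto' (by fun_prop) 0 0 (by simp)
  filter_upwards [hlim.eventually_le_const hε] with h hh
  have hX : |X h h| ≤ ‖X‖ * ‖h‖ ^ 2 := by
    rw [sq, ← mul_assoc]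
    exact X.le_opNorm₂ h h
  have hr : |1 / 2 * X h h + δ * ‖h‖ ^ 2| ≤ (‖X‖ + |δ|) * ‖h‖ ^ 2 := by
    refine (abs_add_le _ _).trans ?_
    rw [abs_mul, abs_mul, abs_of_nonneg (sq_nonneg ‖h‖), abs_of_pos one_half_pos]
    linarith [abs_nonneg (X h h)]
  calc |(p h + (1 / 2 * X h h + δ * ‖h‖ ^ 2)) ^ 2 - p h ^ 2|
      = |1 / 2 * X h h + δ * ‖h‖ ^ 2| * |2 * p h + (1 / 2 * X h h + δ * ‖h‖ ^ 2)| := by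
        rw [← abs_mul]; ring_nf
    _ ≤ (‖X‖ + |δ|) * ‖h‖ ^ 2 * |2 * p h + (1 / 2 * X h h + δ * ‖h‖ ^ 2)| := by gcongr
    _ = (‖X‖ + |δ|) * |2 * p h + (1 / 2 * X h h + δ * ‖h‖ ^ 2)| * ‖h‖ ^ 2 := by ring
    _ ≤ ε * ‖h‖ ^ 2 := by gcongr

lemma IsSuperjet.comp (hw : IsSuperjet w x p X) {f : ℝ → ℝ} (hf : Monotone f) {A B : ℝ}
    (hfx : ∀ η > 0, ∀ᶠ s in 𝓝 (0 : ℝ), f (w x + s) ≤ f (w x) + A * s + B / 2 * s ^ 2 + η * s ^ 2) :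
    IsSuperjet (f ∘ w) x (A • p) (A • X + B • p.smulRight p) where
  symm u v := by simp [hw.symm u v, mul_comm]
  eventually_le η hη := by
    obtain ⟨ε, hε, hε1, hεη⟩ : ∃ ε > 0, ε ≤ 1 ∧ ε * (|A| + |B| + (‖p‖ ^ 2 + 1)) ≤ η := by
      refine ⟨min 1 (η / (|A| + |B| + (‖p‖ ^ 2 + 1))), by positivity, min_le_left _ _, ?_⟩
      rw [← le_div_iff₀ (by positivity)]
      exact min_le_right _ _
    have hlim : Tendsto (fun h : E => p h + (1 / 2 * X h h + ε * ‖h‖ ^ 2)) (𝓝 0) (𝓝 0) :=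
      Continuous.tendsto' (by fun_prop) 0 0 (by simp)
    filter_upwards [hw.eventually_le ε hε, hlim.eventually (hfx ε hε),
      eventually_sq_add_quadratic_le p X (δ := ε) hε] with h hwh hfh hsq
    set s := p h + (1 / 2 * X h h + ε * ‖h‖ ^ 2) with hs
    have hp : p h ^ 2 ≤ ‖p‖ ^ 2 * ‖h‖ ^ 2 := by
      rw [← mul_pow, ← sq_abs]
      exact pow_le_pow_left₀ (abs_nonneg _) (p.le_opNorm h) 2
    have hAterm : A * s ≤ A * p h + A * (1 / 2 * X h h) + |A| * (ε * ‖h‖ ^ 2) := by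
      rw [hs, mul_add, mul_add, ← add_assoc]
      gcongr
      exact le_abs_self A
    have hBterm : B * (s ^ 2 - p h ^ 2) ≤ |B| * (ε * ‖h‖ ^ 2) := by
      refine (le_abs_self _).trans ?_
      rw [abs_mul]
      gcongr
    have hsterm : ε * s ^ 2 ≤ ε * ((‖p‖ ^ 2 + 1) * ‖h‖ ^ 2) := by
      have := (abs_le.1 hsq).2
      gcongr
      nlinarith [sq_nonneg ‖h‖]
    have htotal := mul_le_mul_of_nonneg_right hεη (sq_nonneg ‖h‖)
    have hBpos : 0 ≤ |B| * (ε * ‖h‖ ^ 2) := by positivity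
    calc f (w (x + h)) ≤ f (w x + s) := hf (by linarith)
      _ ≤ f (w x) + A * s + B / 2 * s ^ 2 + ε * s ^ 2 := hfh
      _ ≤ _ := by
        simp only [Function.comp_apply, _root_.add_apply, _root_.smul_apply,
          ContinuousLinearMap.smulRight_apply, smul_eq_mul]
        linarith

end Superjets

section JetSubsolutions

variable {n : ℕ} {a : Fin n → ℝ} {u : En n → ℝ}

/-- Viscosity subsolutions of `M_a(D²u) = 0` on the whole space, in terms of superjets.
Supersolutions are treated as subsolutions after the substitution `(a, u) ↦ (a ∘ Fin.rev, -u)`. -/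
def IsJetSubsol (a : Fin n → ℝ) (u : En n → ℝ) : Prop :=
  ∀ x p X, IsSuperjet u x p X → 0 ≤ Ma a (formMatrix X)

lemma hasFDerivAt_quadratic {E : Type*} [NormedAddCommGroup E] [NormedSpace ℝ E] (x : E)
    (p : E →L[ℝ] ℝ) {X : E →L[ℝ] E →L[ℝ] ℝ} (hX : ∀ u v, X u v = X v u) (z : E) :
    HasFDerivAt (fun z => p (z - x) + 1 / 2 * X (z - x) (z - x)) (p + X (z - x)) z := by
  have hsub : HasFDerivAt (fun z => z - x) (ContinuousLinearMap.id ℝ E) z :=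
    (hasFDerivAt_id z).sub_const x
  refine ((p.hasFDerivAt.comp z hsub).add
    ((X.hasFDerivAt_of_bilinear hsub hsub).const_mul (1 / 2))).congr_fderiv ?_
  ext v
  simp [hX v]
  ring

lemma fderiv_fderiv_quadratic {E : Type*} [NormedAddCommGroup E] [NormedSpace ℝ E] (x : E)
    (p : E →L[ℝ] ℝ) {X : E →L[ℝ] E →L[ℝ] ℝ} (hX : ∀ u v, X u v = X v u) (z : E) :
    fderiv ℝ (fderiv ℝ fun z => p (z - x) + 1 / 2 * X (z - x) (z - x)) z = X := by
  rw [funext fun z => (hasFDerivAt_quadratic x p hX z).fderiv]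
  exact ((X.hasFDerivAt.comp z ((hasFDerivAt_id z).sub_const x)).const_add p).fderiv

lemma IsViscSubsol.isJetSubsol (ha : ∀ i, 0 ≤ a i)
    (h : IsViscSubsol a univ (fun _ => 0) u) : IsJetSubsol a u := by
  intro x p X hX
  let I : En n →L[ℝ] En n →L[ℝ] ℝ := (isBoundedBilinearMap_inner (𝕜 := ℝ)).toContinuousLinearMap
  have hI : ∀ v v', I v v' = ⟪v, v'⟫_ℝ := fun _ _ => rfl
  have hpert : ∀ η > 0, 0 ≤ Ma a (formMatrix X) + 2 * η * ∑ i, a i := by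
    intro η hη
    have hsymm : ∀ v v', (X + (2 * η) • I) v v' = (X + (2 * η) • I) v' v := fun v v' => by
      simp [hI, hX.symm v v', real_inner_comm]
    have htest := h x (mem_univ x)
      (fun z => p (z - x) + 1 / 2 * (X + (2 * η) • I) (z - x) (z - x)) (by fun_prop) ?_
    · rw [hess_eq_formMatrix, fderiv_fderiv_quadratic x p hsymm] at htest
      exact htest.trans (Ma_formMatrix_le ha hsymm hX.symm fun v => by simp [hI])
    · rw [isLocalMaxOn_univ_iff]
      have hev := (Continuous.tendsto' (f := fun z => z - x) (by fun_prop) x 0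
        (sub_self x)).eventually (hX.eventually_le η hη)
      filter_upwards [hev] with z hz
      rw [add_sub_cancel] at hz
      simp only [sub_self, map_zero, _root_.add_apply, _root_.smul_apply, hI, smul_eq_mul,
        real_inner_self_eq_norm_sq]
      linarith
  refine ge_of_tendsto (x := 𝓝[>] 0) ?_ (eventually_mem_nhdsWithin.mono hpert)
  refine (Continuous.tendsto' ?_ 0 _ (by simp)).mono_left nhdsWithin_le_nhds
  fun_prop

lemma IsViscSupersol.neg (h : IsViscSupersol a univ (fun _ => 0) u) :
    IsViscSubsol (a ∘ Fin.rev) univ (fun _ => 0) (-u) := by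
  intro x hx φ hφ hmax
  have hmin := h x hx (-φ) hφ.neg <|
    hmax.neg.congr (.of_forall fun z => by simp; ring) hx
  have hsymm : ∀ v v', fderiv ℝ (fderiv ℝ φ) x v v' = fderiv ℝ (fderiv ℝ φ) x v' v :=
    (hφ.contDiffAt.isSymmSndFDerivAt (by simp)).eq
  have hneg : fderiv ℝ (fderiv ℝ (-φ)) x = -fderiv ℝ (fderiv ℝ φ) x := by
    have hderiv : fderiv ℝ (-φ) = -fderiv ℝ φ := funext fun z => fderiv_neg
    rw [hderiv, fderiv_neg]
  rw [hess_eq_formMatrix, hneg, Ma_formMatrix_neg a hsymm] at hmin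
  rw [hess_eq_formMatrix]
  linarith

lemma IsJetSubsol.add_const (h : IsJetSubsol a u) (c : ℝ) : IsJetSubsol a fun x => u x + c :=
  fun x p X hX => h x p X
    ⟨hX.symm, fun η hη => (hX.eventually_le η hη).mono fun v hv => by linarith⟩

lemma IsJetSubsol.comp_smul (h : IsJetSubsol a u) {R : ℝ} (hR : 0 < R) :
    IsJetSubsol a fun x => u (R • x) := by
  intro x p X hX
  have hjet : IsSuperjet u (R • x) (R⁻¹ • p) ((R⁻¹ ^ 2) • X) := by
    refine ⟨fun v v' => by simp [hX.symm v v'], fun η hη => ?_⟩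
    have hev := (Continuous.tendsto' (continuous_const_smul R⁻¹) (0 : En n) 0
      (smul_zero _)).eventually (hX.eventually_le (η * R ^ 2) (by positivity))
    filter_upwards [hev] with v hv
    simp only [smul_add, smul_inv_smul₀ hR.ne', map_smul, _root_.smul_apply, smul_eq_mul, norm_smul,
      norm_inv, Real.norm_of_nonneg hR.le] at hv ⊢
    convert hv using 2
    · ring
    · field_simp
  have := h _ _ _ hjet
  rw [Ma_formMatrix_smul a hX.symm (by positivity)] at this
  exact nonneg_of_mul_nonneg_right this (by positivity)

lemma eventually_abs_exp_sub_le {η : ℝ} (hη : 0 < η) :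
    ∀ᶠ s in 𝓝 (0 : ℝ), |Real.exp s - (1 + s + s ^ 2 / 2)| ≤ η * s ^ 2 := by
  have hsmall : ∀ᶠ s in 𝓝 (0 : ℝ), |s| ≤ min 1 η :=
    (Continuous.tendsto' continuous_abs (0 : ℝ) 0 abs_zero).eventually_le_const (by positivity)
  filter_upwards [hsmall] with s hs
  have hbound := Real.exp_bound (hs.trans (min_le_left _ _)) (n := 3) (by norm_num)
  have hcube := mul_le_mul_of_nonneg_right (hs.trans (min_le_right _ _)) (sq_nonneg |s|)
  norm_num [Finset.sum_range_succ, Nat.factorial] at hbound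
  rw [sq_abs] at hcube
  nlinarith [abs_nonneg s, sq_abs s, sq_nonneg s]

section Log

variable {x : En n} {p : En n →L[ℝ] ℝ} {X : En n →L[ℝ] En n →L[ℝ] ℝ}

lemma IsJetSubsol.Ma_nonneg_of_log (h : IsJetSubsol a u) (hu : ∀ x, 0 < u x)
    (hX : IsSuperjet (fun z => Real.log (u z)) x p X) :
    0 ≤ Ma a (formMatrix (X + p.smulRight p)) := by
  have hjet := hX.comp Real.exp_monotone (A := u x) (B := u x) fun η hη => by
    filter_upwards [eventually_abs_exp_sub_le (div_pos hη (hu x))] with s hs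
    have hcancel : u x * (η / u x * s ^ 2) = η * s ^ 2 := by field [(hu x).ne']
    have := mul_le_mul_of_nonneg_left (abs_le.1 hs).2 (hu x).le
    rw [Real.exp_add, Real.exp_log (hu x)]
    linarith
  have hform : u x • X + u x • p.smulRight p = u x • (X + p.smulRight p) := by module
  rw [show Real.exp ∘ (fun z => Real.log (u z)) = u from funext fun z => Real.exp_log (hu z),
    hform] at hjet
  have := h _ _ _ hjet
  rw [Ma_formMatrix_smul a (fun v v' => by simp [hX.symm v v', mul_comm]) (hu x).le] at this
  exact nonneg_of_mul_nonneg_right this (hu x)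

lemma IsJetSubsol.Ma_nonpos_of_neg_log (h : IsJetSubsol (a ∘ Fin.rev) (-u)) (hu : ∀ x, 0 < u x)
    (hX : IsSuperjet (fun z => -Real.log (u z)) x p X) :
    Ma a (formMatrix (p.smulRight p - X)) ≤ 0 := by
  have hmono : Monotone fun t => -Real.exp (-t) := fun s t hst => by simpa using hst
  have hjet := hX.comp hmono (A := u x) (B := -u x) fun η hη => by
    have hev := (Continuous.tendsto' continuous_neg (0 : ℝ) 0 neg_zero).eventually
      (eventually_abs_exp_sub_le (div_pos hη (hu x)))
    filter_upwards [hev] with s hs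
    have hcancel : u x * (η / u x * s ^ 2) = η * s ^ 2 := by field [(hu x).ne']
    have := mul_le_mul_of_nonneg_left (abs_le.1 hs).1 (hu x).le
    rw [neg_add, neg_neg, Real.exp_add, Real.exp_log (hu x)]
    linarith
  have hsymm : ∀ v v', (p.smulRight p - X) v v' = (p.smulRight p - X) v' v := fun v v' => by
    simp [hX.symm v v', mul_comm]
  have hform : u x • X + -u x • p.smulRight p = -(u x • (p.smulRight p - X)) := by module
  rw [show (fun t => -Real.exp (-t)) ∘ (fun z => -Real.log (u z)) = -u from
    funext fun z => by simp [Real.exp_log (hu z)], hform] at hjet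
  have := h _ _ _ hjet
  rw [Ma_formMatrix_neg _ (fun v v' => by simp only [_root_.smul_apply, hsymm v v']),
    Ma_formMatrix_smul _ hsymm (hu x).le] at this
  simp only [Function.comp_assoc, Fin.rev_involutive.comp_self, Function.comp_id] at this
  exact nonpos_of_mul_nonpos_right (neg_nonneg.1 this) (hu x)

end Log

end JetSubsolutions

section SuperjetCalculus

variable {E F : Type*} [NormedAddCommGroup E] [NormedSpace ℝ E] [NormedAddCommGroup F]
  [NormedSpace ℝ F]

lemma IsSuperjet.add {w w' : E → ℝ} {x : E} {p p' : E →L[ℝ] ℝ} {X X' : E →L[ℝ] E →L[ℝ] ℝ}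
    (h : IsSuperjet w x p X) (h' : IsSuperjet w' x p' X') :
    IsSuperjet (w + w') x (p + p') (X + X') where
  symm u v := by simp [h.symm u v, h'.symm u v]
  eventually_le η hη := by
    filter_upwards [h.eventually_le (η / 2) (half_pos hη), h'.eventually_le (η / 2) (half_pos hη)]
      with v hv hv'
    simp only [Pi.add_apply, _root_.add_apply]
    linarith

lemma IsSuperjet.comp_continuousLinearMap {w : F → ℝ} {T : E →L[ℝ] F} {x : E} {p : F →L[ℝ] ℝ}
    {X : F →L[ℝ] F →L[ℝ] ℝ} (h : IsSuperjet w (T x) p X) :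
    IsSuperjet (w ∘ T) x (p ∘L T) (X.bilinearComp T T) where
  symm u v := h.symm _ _
  eventually_le η hη := by
    have hT : Tendsto T (𝓝 0) (𝓝 0) := T.continuous.tendsto' 0 0 (map_zero T)
    filter_upwards [hT.eventually (h.eventually_le (η / (‖T‖ ^ 2 + 1)) (by positivity))] with v hv
    have hle : η / (‖T‖ ^ 2 + 1) * ‖T v‖ ^ 2 ≤ η * ‖v‖ ^ 2 := by
      rw [div_mul_eq_mul_div, div_le_iff₀ (by positivity), mul_assoc]
      have hTv : ‖T v‖ ^ 2 ≤ ‖T‖ ^ 2 * ‖v‖ ^ 2 := by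
        rw [← mul_pow]
        exact pow_le_pow_left₀ (norm_nonneg _) (T.le_opNorm v) 2
      gcongr
      linarith [sq_nonneg ‖v‖]
    simp only [Function.comp_apply, map_add, ContinuousLinearMap.comp_apply,
      ContinuousLinearMap.bilinearComp_apply]
    linarith

lemma eq_zero_and_nonneg_of_eventually {a b : ℝ} (h : ∀ᶠ t in 𝓝 (0 : ℝ), 0 ≤ t * a + t ^ 2 * b) :
    a = 0 ∧ 0 ≤ b := by
  have hmin : IsLocalMin (fun t : ℝ => t * a + t ^ 2 * b) 0 := by simpa [IsLocalMin, IsMinFilter]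
  have hder : HasDerivAt (fun t : ℝ => t * a + t ^ 2 * b) a 0 := by
    simpa using ((hasDerivAt_id' (0 : ℝ)).mul_const a).fun_add
      ((hasDerivAt_pow 2 (0 : ℝ)).mul_const b)
  obtain rfl := hmin.hasDerivAt_eq_zero hder
  obtain ⟨t, ht, ht0⟩ := ((h.filter_mono nhdsWithin_le_nhds).and self_mem_nhdsWithin :
    ∀ᶠ t in 𝓝[≠] (0 : ℝ), 0 ≤ t * 0 + t ^ 2 * b ∧ t ≠ 0).exists
  exact ⟨rfl, nonneg_of_mul_nonneg_right (by simpa using ht) (by positivity)⟩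

lemma IsSuperjet.eq_zero_and_nonneg_of_isLocalMin {w : E → ℝ} {x : E} {p : E →L[ℝ] ℝ}
    {X : E →L[ℝ] E →L[ℝ] ℝ} (h : IsSuperjet w x p X) (hmin : IsLocalMin w x) :
    p = 0 ∧ ∀ v, 0 ≤ X v v := by
  have key (v : E) (η : ℝ) (hη : 0 < η) : p v = 0 ∧ 0 ≤ 1 / 2 * X v v + η * ‖v‖ ^ 2 := by
    have hlim : Tendsto (fun t : ℝ => t • v) (𝓝 0) (𝓝 0) :=
      Continuous.tendsto' (by fun_prop) 0 0 (zero_smul ℝ v)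
    refine eq_zero_and_nonneg_of_eventually ?_
    filter_upwards [hlim.eventually (h.eventually_le η hη),
      hlim.eventually (eventually_nhds_zero_add hmin)] with t hle hge
    simp only [map_smul, _root_.smul_apply, smul_eq_mul, norm_smul, mul_pow,
      Real.norm_eq_abs, sq_abs] at hle
    linarith
  refine ⟨ContinuousLinearMap.ext fun v => (key v 1 one_pos).1, fun v => ?_⟩
  have hlim : Tendsto (fun η : ℝ => 1 / 2 * X v v + η * ‖v‖ ^ 2) (𝓝[>] 0) (𝓝 (1 / 2 * X v v)) :=
    (Continuous.tendsto' (by fun_prop) 0 _ (by simp)).mono_left nhdsWithin_le_nhds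
  have := ge_of_tendsto hlim (eventually_mem_nhdsWithin.mono fun η hη => (key v η hη).2)
  linarith

lemma isSuperjet_of_hasFDerivAt {w : E → ℝ} {x : E} {P : E → E →L[ℝ] ℝ} {X : E →L[ℝ] E →L[ℝ] ℝ}
    (hw : ∀ᶠ y in 𝓝 x, HasFDerivAt w (P y) y) (hP : HasFDerivAt P X x) :
    IsSuperjet w x (P x) X where
  symm := second_derivative_symmetric_of_eventually hw hP
  eventually_le η hη := by
    have hsymm := second_derivative_symmetric_of_eventually hw hP
    have hlin := (hasFDerivAt_iff_isLittleO_nhds_zero.1 hP).bound hη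
    obtain ⟨ε, hε, hball⟩ :=
      Metric.eventually_nhds_iff_ball.1 (hlin.and (eventually_nhds_zero_add hw))
    have hder : ∀ v ∈ ball (0 : E) ε, HasFDerivAt (fun v => w (x + v) - (P x v + 1 / 2 * X v v))
        (P (x + v) - P x - X v) v := by
      intro v hv
      have hshift := (hball v hv).2.comp v ((hasFDerivAt_id v).const_add x)
      have hquad := hasFDerivAt_quadratic 0 (P x) hsymm v
      simp only [sub_zero] at hquad
      exact (hshift.sub hquad).congr_fderiv (by ext; simp [sub_sub])
    filter_upwards [ball_mem_nhds (0 : E) hε] with v hv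
    have hmem : ∀ u ∈ closedBall (0 : E) ‖v‖, u ∈ ball (0 : E) ε := fun u hu =>
      closedBall_subset_ball (mem_ball_zero_iff.1 hv) hu
    have hmean := (convex_closedBall (0 : E) ‖v‖).norm_image_sub_le_of_norm_hasFDerivWithin_le
      (C := η * ‖v‖) (fun u hu => (hder u (hmem u hu)).hasFDerivWithinAt)
      (fun u hu => (hball u (hmem u hu)).1.trans <| by gcongr; simpa using hu)
      (mem_closedBall_self (norm_nonneg v)) (mem_closedBall_zero_iff.2 le_rfl)
    simp only [add_zero, map_zero, mul_zero, sub_zero] at hmean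
    linarith [le_of_abs_le hmean]

end SuperjetCalculus

section QuadraticRemainder

lemma hasFDerivAt_of_abs_sub_le {E : Type*} [NormedAddCommGroup E] [NormedSpace ℝ E] {W : E → ℝ}
    {x : E} {p : E →L[ℝ] ℝ} {K : ℝ} (h : ∀ h, |W (x + h) - W x - p h| ≤ K * ‖h‖ ^ 2) :
    HasFDerivAt W p x := by
  rw [hasFDerivAt_iff_isLittleO_nhds_zero]
  refine (Asymptotics.IsBigO.of_bound K (.of_forall fun v => ?_)).trans_isLittleO
    (Asymptotics.isLittleO_norm_pow_id one_lt_two)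
  simpa using h v

variable {E : Type*} [NormedAddCommGroup E] [NormedSpace ℝ E]
  {W : E → ℝ} {P : E → E →L[ℝ] ℝ} {K : ℝ≥0}

/-- `W` is of class `C^{1,1}` with derivative `P`, in the form of a global quadratic bound on the
first-order Taylor remainder. -/
def HasQuadraticRemainder (W : E → ℝ) (P : E → E →L[ℝ] ℝ) (K : ℝ≥0) : Prop :=
  ∀ x h, |W (x + h) - W x - P x h| ≤ K * ‖h‖ ^ 2

lemma HasQuadraticRemainder.hasFDerivAt (hW : HasQuadraticRemainder W P K) (x : E) :
    HasFDerivAt W (P x) x :=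
  hasFDerivAt_of_abs_sub_le (hW x)

lemma HasQuadraticRemainder.lipschitzWith (hW : HasQuadraticRemainder W P K) :
    LipschitzWith (6 * K) P := by
  refine LipschitzWith.of_dist_le_mul fun y x => ?_
  rw [dist_eq_norm, dist_eq_norm]
  rcases eq_or_ne y x with rfl | hne
  · simp
  have hk : 0 < ‖y - x‖ := norm_pos_iff.2 (sub_ne_zero.2 hne)
  refine ContinuousLinearMap.opNorm_le_of_unit_norm (by positivity) fun z hz => ?_
  set k := y - x with hk_def
  have hy : x + k = y := by simp [hk_def]
  have hv : ‖‖k‖ • z‖ = ‖k‖ := by simp [norm_smul, hz]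
  have hkv : K * ‖k + ‖k‖ • z‖ ^ 2 ≤ K * (2 * ‖k‖) ^ 2 := by
    gcongr
    linarith [norm_add_le k (‖k‖ • z)]
  have h₁ := hW x (k + ‖k‖ • z)
  have h₂ := hW x k
  have h₃ := hW y (‖k‖ • z)
  rw [← add_assoc, hy, map_add] at h₁
  rw [hy] at h₂
  rw [hv] at h₃
  have hsub : |(P y - P x) (‖k‖ • z)| ≤ 6 * K * ‖k‖ ^ 2 := by
    rw [abs_le] at *
    rw [_root_.sub_apply]
    constructor <;> linarith
  rw [map_smul, smul_eq_mul, abs_mul, abs_norm] at hsub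
  refine le_of_mul_le_mul_left (hsub.trans_eq ?_) hk
  push_cast
  ring

end QuadraticRemainder

section SupConvolution

variable {E : Type*} [NormedAddCommGroup E] {v : E → ℝ} {N κ : ℝ}

/-- The sup-convolution of `v`, with penalty `κ‖·‖²`. -/
noncomputable def supConv (v : E → ℝ) (κ : ℝ) (z : E) : ℝ :=
  ⨆ w, v w - κ * ‖w - z‖ ^ 2

lemma le_supConv (hN : ∀ x, |v x| ≤ N) (hκ : 0 ≤ κ) (z w : E) :
    v w - κ * ‖w - z‖ ^ 2 ≤ supConv v κ z := by
  refine le_ciSup (f := fun w => v w - κ * ‖w - z‖ ^ 2) ⟨N, ?_⟩ w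
  rintro _ ⟨w, rfl⟩
  have : 0 ≤ κ * ‖w - z‖ ^ 2 := by positivity
  linarith [le_of_abs_le (hN w)]

lemma exists_supConv_eq [ProperSpace E] (hv : Continuous v) (hN : ∀ x, |v x| ≤ N) (hκ : 0 < κ)
    (z : E) : ∃ w, supConv v κ z = v w - κ * ‖w - z‖ ^ 2 := by
  have hlim : Tendsto (fun w => N - κ * ‖w - z‖ ^ 2) (cocompact E) atBot := by
    simp only [← dist_eq_norm]
    exact tendsto_const_nhds.add_atBot <| tendsto_neg_atTop_atBot.comp <|
      ((tendsto_pow_atTop two_ne_zero).comp (tendsto_dist_right_cocompact_atTop z)).const_mul_atTop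
        hκ
  obtain ⟨w, hw⟩ := (show Continuous fun w => v w - κ * ‖w - z‖ ^ 2 by
    fun_prop).exists_forall_ge (tendsto_atBot_mono
      (fun w => sub_le_sub_right (le_of_abs_le (hN w)) _) hlim)
  exact ⟨w, le_antisymm (ciSup_le hw) (le_supConv hN hκ.le z w)⟩

lemma abs_supConv_le (hN : ∀ x, |v x| ≤ N) (hκ : 0 ≤ κ) (z : E) : |supConv v κ z| ≤ N := by
  have hz := le_supConv hN hκ z z
  simp only [sub_self, norm_zero, ne_eq, OfNat.ofNat_ne_zero, not_false_eq_true, zero_pow,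
    mul_zero, sub_zero] at hz
  refine abs_le.2 ⟨(neg_le_of_abs_le (hN z)).trans hz, ciSup_le fun w => ?_⟩
  have : 0 ≤ κ * ‖w - z‖ ^ 2 := by positivity
  linarith [le_of_abs_le (hN w)]

variable [InnerProductSpace ℝ E]

lemma supConv_add_inner_le (hN : ∀ x, |v x| ≤ N) (hκ : 0 ≤ κ) {z w : E}
    (hw : supConv v κ z = v w - κ * ‖w - z‖ ^ 2) (k : E) :
    supConv v κ z + 2 * κ * ⟪w - z, k⟫_ℝ - κ * ‖k‖ ^ 2 ≤ supConv v κ (z + k) := by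
  have h := le_supConv hN hκ (z + k) w
  rw [← sub_sub, norm_sub_sq_real (w - z)] at h
  linarith

lemma convexOn_supConv_add [ProperSpace E] (hv : Continuous v) (hN : ∀ x, |v x| ≤ N)
    (hκ : 0 < κ) : ConvexOn ℝ univ fun z => supConv v κ z + κ * ‖z‖ ^ 2 := by
  refine ⟨convex_univ, fun x _ y _ a b ha hb hab => ?_⟩
  obtain ⟨w, hw⟩ := exists_supConv_eq hv hN hκ (a • x + b • y)
  have hx := mul_le_mul_of_nonneg_left (le_supConv hN hκ.le x w) ha
  have hy := mul_le_mul_of_nonneg_left (le_supConv hN hκ.le y w) hb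
  rw [norm_sub_sq_real] at hw hx hy
  rw [inner_add_right, inner_smul_right, inner_smul_right] at hw
  obtain rfl : b = 1 - a := by linarith
  simp only [smul_eq_mul]
  linarith

lemma continuous_supConv [FiniteDimensional ℝ E] (hv : Continuous v) (hN : ∀ x, |v x| ≤ N)
    (hκ : 0 < κ) : Continuous (supConv v κ) := by
  have : ProperSpace E := FiniteDimensional.proper_real E
  have hconv := (convexOn_supConv_add hv hN hκ).continuousOn isOpen_univ
  rw [continuousOn_univ] at hconv
  refine (hconv.sub (show Continuous fun z : E => κ * ‖z‖ ^ 2 by fun_prop)).congr fun z => ?_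
  simp

end SupConvolution

section LasryLions

variable {E : Type*} [NormedAddCommGroup E] [InnerProductSpace ℝ E] {v : E → ℝ} {N κ : ℝ}

/-- The Lasry–Lions regularisation of `v` from above: a sup-convolution, followed by an
inf-convolution with the doubled penalty. -/
noncomputable def lasryLions (v : E → ℝ) (κ : ℝ) : E → ℝ :=
  -supConv (-supConv v κ) (2 * κ)

omit [InnerProductSpace ℝ E] in
lemma lasryLions_le_add (hN : ∀ x, |v x| ≤ N) (hκ : 0 ≤ κ) (x z : E) :
    lasryLions v κ x ≤ supConv v κ z + 2 * κ * ‖z - x‖ ^ 2 := by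
  have h := le_supConv (v := -supConv v κ) (κ := 2 * κ) (N := N)
    (fun x => by simpa using abs_supConv_le hN hκ x) (by positivity) x z
  simp only [lasryLions, Pi.neg_apply] at h ⊢
  linarith

variable [FiniteDimensional ℝ E]

lemma exists_lasryLions_eq (hv : Continuous v) (hN : ∀ x, |v x| ≤ N) (hκ : 0 < κ) (x : E) :
    ∃ z, lasryLions v κ x = supConv v κ z + 2 * κ * ‖z - x‖ ^ 2 := by
  have : ProperSpace E := FiniteDimensional.proper_real E
  obtain ⟨z, hz⟩ := exists_supConv_eq (v := -supConv v κ) (κ := 2 * κ) (N := N)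
    (continuous_supConv hv hN hκ).neg (fun x => by simpa using abs_supConv_le hN hκ.le x)
    (by positivity) x
  refine ⟨z, ?_⟩
  simp only [lasryLions, Pi.neg_apply] at hz ⊢
  linarith

lemma sub_le_lasryLions (hv : Continuous v) (hN : ∀ x, |v x| ≤ N) (hκ : 0 < κ) (x w : E) :
    v w - 2 * κ * ‖w - x‖ ^ 2 ≤ lasryLions v κ x := by
  obtain ⟨z, hz⟩ := exists_lasryLions_eq hv hN hκ x
  have hpar : ‖w - z‖ ^ 2 ≤ 2 * ‖w - x‖ ^ 2 + 2 * ‖z - x‖ ^ 2 := by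
    have h := parallelogram_law_with_norm ℝ (w - x) (z - x)
    rw [sub_sub_sub_cancel_right] at h
    linarith [mul_self_nonneg ‖w - x + (z - x)‖, sq ‖w - x‖, sq ‖z - x‖, sq ‖w - z‖]
  linarith [le_supConv hN hκ.le z w, mul_le_mul_of_nonneg_left hpar hκ.le]

lemma le_lasryLions (hv : Continuous v) (hN : ∀ x, |v x| ≤ N) (hκ : 0 < κ) (x : E) :
    v x ≤ lasryLions v κ x := by
  simpa using sub_le_lasryLions hv hN hκ x x

lemma exists_lasryLions_le (hv : Continuous v) (hN : ∀ x, |v x| ≤ N) (hκ : 0 < κ) (x : E) :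
    ∃ z, κ * ‖z - x‖ ^ 2 ≤ 2 * N ∧ lasryLions v κ x ≤ v z := by
  have : ProperSpace E := FiniteDimensional.proper_real E
  obtain ⟨z, hz⟩ := exists_supConv_eq hv hN hκ x
  have hle := lasryLions_le_add hN hκ.le x x
  have hge := le_lasryLions hv hN hκ x
  have hpos : 0 ≤ κ * ‖z - x‖ ^ 2 := by positivity
  simp only [sub_self, norm_zero, ne_eq, OfNat.ofNat_ne_zero, not_false_eq_true, zero_pow,
    mul_zero, add_zero] at hle
  exact ⟨z, by linarith [le_of_abs_le (hN z), neg_le_of_abs_le (hN x)], by linarith⟩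

lemma lasryLions_le_midpoint (hv : Continuous v) (hN : ∀ x, |v x| ≤ N) (hκ : 0 < κ) (x h : E) :
    2 * lasryLions v κ x ≤
      lasryLions v κ (x + h) + lasryLions v κ (x - h) + 4 * κ * ‖h‖ ^ 2 := by
  have : ProperSpace E := FiniteDimensional.proper_real E
  obtain ⟨z, hz⟩ := exists_lasryLions_eq hv hN hκ (x + h)
  obtain ⟨z', hz'⟩ := exists_lasryLions_eq hv hN hκ (x - h)
  set m := midpoint ℝ z z' with hm
  set δ := (1 / 2 : ℝ) • (z - z')
  have hmz : m + δ = z := by rw [hm, midpoint_eq_smul_add, invOf_eq_inv]; module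
  have hmz' : m + -δ = z' := by rw [hm, midpoint_eq_smul_add, invOf_eq_inv]; module
  obtain ⟨w, hw⟩ := exists_supConv_eq hv hN hκ m
  have hadd := supConv_add_inner_le hN hκ.le hw δ
  have hsub := supConv_add_inner_le hN hκ.le hw (-δ)
  rw [hmz] at hadd
  rw [hmz', inner_neg_right, norm_neg] at hsub
  have hpar := parallelogram_law_with_norm ℝ (m - x) (δ - h)
  rw [show m - x + (δ - h) = z - (x + h) by rw [← hmz]; module,
    show m - x - (δ - h) = z' - (x - h) by rw [← hmz']; module] at hpar
  have hpar' := parallelogram_law_with_norm ℝ (δ - h) h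
  rw [sub_add_cancel] at hpar'
  have hnn := mul_self_nonneg ‖δ - h - h‖
  simp only [← sq] at hpar hpar' hnn
  have hδh : ‖δ‖ ^ 2 ≤ 2 * ‖δ - h‖ ^ 2 + 2 * ‖h‖ ^ 2 := by linarith
  have hx := lasryLions_le_add hN hκ.le x m
  linear_combination 2 * hx + hadd + hsub + 2 * κ * hδh - hz - hz' - 2 * κ * hpar

lemma abs_lasryLions_sub_le (hv : Continuous v) (hN : ∀ x, |v x| ≤ N) (hκ : 0 < κ) {x z : E}
    (hz : lasryLions v κ x = supConv v κ z + 2 * κ * ‖z - x‖ ^ 2) (h : E) :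
    |lasryLions v κ (x + h) - lasryLions v κ x - innerSL ℝ ((4 * κ) • (x - z)) h| ≤
      6 * κ * ‖h‖ ^ 2 := by
  have hupper (h : E) : lasryLions v κ (x + h) - lasryLions v κ x -
      innerSL ℝ ((4 * κ) • (x - z)) h ≤ 2 * κ * ‖h‖ ^ 2 := by
    have hle := lasryLions_le_add hN hκ.le (x + h) z
    rw [← sub_sub, norm_sub_sq_real (z - x), ← neg_sub x z, inner_neg_left, norm_neg] at hle
    rw [norm_sub_rev] at hz
    simp only [innerSL_apply_apply, inner_smul_left, RCLike.conj_to_real]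
    linarith
  have hneg := hupper (-h)
  rw [map_neg, norm_neg, ← sub_eq_add_neg] at hneg
  have hmid := lasryLions_le_midpoint hv hN hκ x h
  have hpos : 0 ≤ κ * ‖h‖ ^ 2 := by positivity
  exact abs_le.2 ⟨by linarith, by linarith [hupper h]⟩

lemma hasQuadraticRemainder_lasryLions (hv : Continuous v) (hN : ∀ x, |v x| ≤ N) (hκ : 0 < κ) :
    HasQuadraticRemainder (lasryLions v κ) (fderiv ℝ (lasryLions v κ)) (6 * κ).toNNReal := by
  intro x h
  obtain ⟨z, hz⟩ := exists_lasryLions_eq hv hN hκ x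
  have hquad := abs_lasryLions_sub_le hv hN hκ hz
  rw [(hasFDerivAt_of_abs_sub_le hquad).fderiv, Real.coe_toNNReal _ (by positivity)]
  exact hquad h

-- Between the two slopes `4κ(x - z)` and `2κ(w - z)` of `supConv v κ` at `z`, the point `z` stays
-- optimal in the inf-convolution, which is therefore a paraboloid of opening `4κ` in between.
lemma add_le_lasryLions (hv : Continuous v) (hN : ∀ x, |v x| ≤ N) (hκ : 0 < κ) {x z w : E}
    (hz : lasryLions v κ x = supConv v κ z + 2 * κ * ‖z - x‖ ^ 2)
    (hw : supConv v κ z = v w - κ * ‖w - z‖ ^ 2) {s : ℝ} (hs : 0 ≤ s) (hs' : s ≤ 1) :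
    lasryLions v κ x + s * innerSL ℝ ((4 * κ) • (x - z)) (midpoint ℝ w z - x) +
        2 * κ * (s ^ 2 * ‖midpoint ℝ w z - x‖ ^ 2) ≤
      lasryLions v κ (x + s • (midpoint ℝ w z - x)) := by
  set e := midpoint ℝ w z - x with he
  have hwe : w - z = (2 : ℝ) • (e + (x - z)) := by
    rw [he, midpoint_eq_smul_add, invOf_eq_inv]
    module
  obtain ⟨z', hz'⟩ := exists_lasryLions_eq hv hN hκ (x + s • e)
  have hmin := lasryLions_le_add hN hκ.le x z'
  have hslope := supConv_add_inner_le hN hκ.le hw (z' - z)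
  rw [add_sub_cancel, hwe] at hslope
  rw [show z' - x = z' - z - (x - z) by abel, norm_sub_sq_real (z' - z)] at hmin
  rw [show z' - (x + s • e) = z' - z - (x - z) - s • e by abel, norm_sub_sq_real (z' - z - (x - z)),
    norm_sub_sq_real (z' - z)] at hz'
  simp only [inner_smul_left, inner_smul_right, inner_add_left, inner_sub_left (z' - z),
    norm_smul, mul_pow, RCLike.conj_to_real, Real.norm_eq_abs, sq_abs] at hz' hslope
  rw [norm_sub_rev z x] at hz
  rw [hz', innerSL_apply_apply, inner_smul_left, RCLike.conj_to_real]
  have hpos : 0 ≤ s * (κ * ‖z' - z‖ ^ 2) := by positivity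
  linear_combination mul_le_mul_of_nonneg_left hmin (sub_nonneg.2 hs') + s * hslope + hpos +
    s * hz - 4 * κ * s * (real_inner_comm (z' - z) e + real_inner_comm (z' - z) (x - z))

lemma midpoint_eq_of_isSuperjet_lasryLions (hv : Continuous v) (hN : ∀ x, |v x| ≤ N) (hκ : 0 < κ)
    {x z w : E} (hz : lasryLions v κ x = supConv v κ z + 2 * κ * ‖z - x‖ ^ 2)
    (hw : supConv v κ z = v w - κ * ‖w - z‖ ^ 2) {X : E →L[ℝ] E →L[ℝ] ℝ} {c : ℝ} (hc : c < 4 * κ)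
    (hX : ∀ u, X u u ≤ c * ‖u‖ ^ 2)
    (hW : IsSuperjet (lasryLions v κ) x (fderiv ℝ (lasryLions v κ) x) X) :
    midpoint ℝ w z = x := by
  by_contra hne
  rw [(hasFDerivAt_of_abs_sub_le (abs_lasryLions_sub_le hv hN hκ hz)).fderiv] at hW
  set e := midpoint ℝ w z - x with he
  have he0 : 0 < ‖e‖ := norm_pos_iff.2 (sub_ne_zero.2 hne)
  have hlim : Tendsto (fun s : ℝ => s • e) (𝓝[>] 0) (𝓝 0) :=
    (Continuous.tendsto' (by fun_prop) 0 0 (zero_smul ℝ e)).mono_left nhdsWithin_le_nhds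
  obtain ⟨s, hle, hs, hs1⟩ := ((hlim.eventually (hW.eventually_le (κ - c / 4) (by linarith))).and
    (Ioc_mem_nhdsGT one_pos)).exists
  have hge := add_le_lasryLions hv hN hκ hz hw hs.le hs1
  simp only [← he, map_smul, _root_.smul_apply, smul_eq_mul] at hge
  simp only [map_smul, _root_.smul_apply, smul_eq_mul, norm_smul, mul_pow, Real.norm_eq_abs,
    sq_abs] at hle
  have hXe : s ^ 2 * X e e ≤ s ^ 2 * (c * ‖e‖ ^ 2) := by gcongr; exact hX e
  have hpos : 0 < (4 * κ - c) * (s ^ 2 * ‖e‖ ^ 2) := mul_pos (sub_pos.2 hc) (by positivity)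
  linarith

lemma IsSuperjet.of_lasryLions (hv : Continuous v) (hN : ∀ x, |v x| ≤ N) (hκ : 0 < κ) {x : E}
    {X : E →L[ℝ] E →L[ℝ] ℝ} {c : ℝ} (hc : c < 4 * κ) (hX : ∀ u, X u u ≤ c * ‖u‖ ^ 2)
    (hW : IsSuperjet (lasryLions v κ) x (fderiv ℝ (lasryLions v κ) x) X) :
    ∃ w, κ * ‖w - x‖ ^ 2 ≤ 2 * N ∧ IsSuperjet v w (fderiv ℝ (lasryLions v κ) x) X := by
  have : ProperSpace E := FiniteDimensional.proper_real E
  obtain ⟨z, hz⟩ := exists_lasryLions_eq hv hN hκ x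
  obtain ⟨w, hw⟩ := exists_supConv_eq hv hN hκ z
  obtain rfl := midpoint_eq_of_isSuperjet_lasryLions hv hN hκ hz hw hc hX hW
  set x := midpoint ℝ w z with hx
  have hwz : w - z = (2 : ℝ) • (w - x) := by rw [hx, midpoint_eq_smul_add, invOf_eq_inv]; module
  have hzx : z - x = -(w - x) := by rw [hx, midpoint_eq_smul_add, invOf_eq_inv]; module
  rw [hwz, norm_smul, mul_pow, Real.norm_ofNat] at hw
  rw [hzx, norm_neg] at hz
  have hpos : 0 ≤ κ * ‖w - x‖ ^ 2 := by positivity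
  refine ⟨w, ?_, hW.symm, fun η hη => ?_⟩
  · linarith [le_lasryLions hv hN hκ x, le_of_abs_le (hN w), neg_le_of_abs_le (hN x)]
  · filter_upwards [hW.eventually_le η hη] with h hh
    have hge := sub_le_lasryLions hv hN hκ (x + h) (w + h)
    rw [add_sub_add_right_eq_sub] at hge
    linarith

end LasryLions

section Jensen

variable {E F : Type*} [NormedAddCommGroup E] [NormedSpace ℝ E] [FiniteDimensional ℝ E]
  [MeasurableSpace E] [BorelSpace E] [NormedAddCommGroup F] [NormedSpace ℝ F]
  [FiniteDimensional ℝ F] [MeasurableSpace F] [BorelSpace F]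

lemma addHaar_image_eq_zero_of_locallyLipschitzOn {f : E → F} {s : Set E}
    (hf : LocallyLipschitzOn s f) (hEF : Module.finrank ℝ E = Module.finrank ℝ F)
    (μ : Measure E) [μ.IsAddHaarMeasure] (ν : Measure F) [ν.IsAddHaarMeasure] (hs : μ s = 0) :
    ν (f '' s) = 0 := by
  have hE : (μH[Module.finrank ℝ F] : Measure E).IsAddHaarMeasure :=
    hEF ▸ isAddHaarMeasure_hausdorffMeasure
  have hF : (μH[Module.finrank ℝ F] : Measure F).IsAddHaarMeasure :=
    isAddHaarMeasure_hausdorffMeasure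
  have hs' : (μH[Module.finrank ℝ F] : Measure E) s = 0 :=
    Measure.absolutelyContinuous_isAddHaarMeasure _ μ hs
  refine Measure.absolutelyContinuous_isAddHaarMeasure ν (μH[Module.finrank ℝ F] : Measure F) ?_
  have hf' : ∀ x ∈ s, ∃ (K : ℝ≥0) (t : Set E), t ∈ 𝓝[s] x ∧ LipschitzOnWith K f t :=
    fun x hx => hf hx
  choose! K t ht hlip using hf'
  obtain ⟨c, hcs, hc, hcover⟩ := TopologicalSpace.countable_cover_nhdsWithin ht
  have hsub : f '' s ⊆ ⋃ x ∈ c, f '' (t x ∩ s) := by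
    rintro _ ⟨y, hy, rfl⟩
    obtain ⟨x, hx, hyx⟩ := mem_iUnion₂.1 (hcover hy)
    exact mem_iUnion₂.2 ⟨x, hx, y, ⟨hyx, hy⟩, rfl⟩
  refine measure_mono_null hsub ((measure_biUnion_null_iff hc).2 fun x hx => ?_)
  have hle := ((hlip x (hcs hx)).mono inter_subset_left).hausdorffMeasure_image_le
    (s := t x ∩ s) (Nat.cast_nonneg (Module.finrank ℝ F))
  rw [measure_mono_null inter_subset_right hs', mul_zero] at hle
  exact le_antisymm hle zero_le

omit [FiniteDimensional ℝ E] [MeasurableSpace E] [BorelSpace E] in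
lemma exists_forall_isLocalMax_sub {G : E → ℝ} {K : Set E} (hK : IsCompact K)
    (hG : ContinuousOn G K) {z₀ : E} (hz₀ : z₀ ∈ K) (hlt : ∀ z ∈ K \ interior K, G z < G z₀) :
    ∃ r > 0, ∀ ℓ : E →L[ℝ] ℝ, ‖ℓ‖ < r → ∃ z ∈ interior K, IsLocalMax (fun y => G y - ℓ y) z := by
  obtain ⟨r, hr, hrle⟩ := (hK.diff isOpen_interior).exists_forall_le'
    (f := fun z => (G z₀ - G z) / (‖z₀ - z‖ + 1))
    (ContinuousOn.div (continuousOn_const.sub (hG.mono sdiff_subset)) (by fun_prop)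
      fun z _ => by positivity)
    (a := 0) fun z hz => div_pos (sub_pos.2 (hlt z hz)) (by positivity)
  refine ⟨r, hr, fun ℓ hℓ => ?_⟩
  obtain ⟨z, hz, hmax⟩ :=
    hK.exists_isMaxOn ⟨z₀, hz₀⟩ (hG.sub ℓ.continuous.continuousOn)
  have hzint : z ∈ interior K := by
    by_contra hzint
    have hge : G z₀ - ℓ z₀ ≤ G z - ℓ z := hmax hz₀
    have hle : ℓ z₀ - ℓ z ≤ ‖ℓ‖ * ‖z₀ - z‖ := by
      rw [← map_sub]
      exact (Real.le_norm_self _).trans (ℓ.le_opNorm _)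
    have hgap := (le_div_iff₀ (by positivity)).1 (hrle z ⟨hz, hzint⟩)
    have : ‖ℓ‖ * ‖z₀ - z‖ ≤ r * ‖z₀ - z‖ := by gcongr
    linarith
  exact ⟨z, hzint, hmax.isLocalMax (mem_interior_iff_mem_nhds.1 hzint)⟩

-- The linear perturbations with an interior maximum fill a ball of the dual space, and each of
-- them is the value of the locally Lipschitz map `G'` at its maximum point.
lemma exists_isLocalMax_sub_fderiv_of_ae (μ : Measure E) [μ.IsAddHaarMeasure] {G : E → ℝ}
    {G' : E → E →L[ℝ] ℝ} {K : Set E} (hK : IsCompact K) (hG : ContinuousOn G K)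
    (hG' : ∀ z ∈ interior K, HasFDerivAt G (G' z) z)
    (hlip : LocallyLipschitzOn (interior K) G') {z₀ : E} (hz₀ : z₀ ∈ K)
    (hlt : ∀ z ∈ K \ interior K, G z < G z₀) {q : E → Prop} (hq : ∀ᵐ z ∂μ, q z) {ε : ℝ}
    (hε : 0 < ε) :
    ∃ z ∈ interior K, q z ∧ ‖G' z‖ < ε ∧ IsLocalMax (fun y => G y - G' z y) z := by
  obtain ⟨r, hr, hmax⟩ := exists_forall_isLocalMax_sub hK hG hz₀ hlt
  by_contra! hcon
  set S := {z ∈ interior K | ‖G' z‖ < ε ∧ IsLocalMax (fun y => G y - G' z y) z}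
  have hS : μ S = 0 :=
    measure_mono_null (fun z hz hqz => hcon z hz.1 hqz hz.2.1 hz.2.2) (ae_iff.1 hq)
  have hball : ball 0 (min r ε) ⊆ G' '' S := by
    intro ℓ hℓ
    rw [mem_ball_zero_iff, lt_min_iff] at hℓ
    obtain ⟨z, hz, hzmax⟩ := hmax ℓ hℓ.1
    have hzero := hzmax.hasFDerivAt_eq_zero ((hG' z hz).sub ℓ.hasFDerivAt)
    obtain rfl := sub_eq_zero.1 hzero
    exact ⟨z, ⟨hz, hℓ.2, hzmax⟩, rfl⟩
  have hnull : Measure.addHaar (G' '' S) = 0 :=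
    addHaar_image_eq_zero_of_locallyLipschitzOn (hlip.mono fun z hz => hz.1)
      (Subspace.dual_finrank_eq.symm.trans LinearMap.toContinuousLinearMap.finrank_eq) μ _ hS
  exact (isOpen_ball.measure_pos Measure.addHaar ⟨0, mem_ball_self (lt_min hr hε)⟩).ne'
    (measure_mono_null hball hnull)

end Jensen

section SmoothSums

variable {E F : Type*} [NormedAddCommGroup E] [NormedSpace ℝ E] [NormedAddCommGroup F]
  [NormedSpace ℝ F]

lemma hessian_add_le_of_isLocalMax {W₁ : E → ℝ} {W₂ : F → ℝ} {Φ : E × F → ℝ} {z : E × F}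
    (hW₁ : Differentiable ℝ W₁) (hW₂ : Differentiable ℝ W₂)
    (hX : DifferentiableAt ℝ (fderiv ℝ W₁) z.1) (hY : DifferentiableAt ℝ (fderiv ℝ W₂) z.2)
    (hΦ : ContDiffAt ℝ 2 Φ z) {ℓ : E × F →L[ℝ] ℝ}
    (hmax : IsLocalMax (fun y => W₁ y.1 + W₂ y.2 - Φ y - ℓ y) z) (ξ : E) (ζ : F) :
    fderiv ℝ (fderiv ℝ W₁) z.1 ξ ξ + fderiv ℝ (fderiv ℝ W₂) z.2 ζ ζ ≤
      fderiv ℝ (fderiv ℝ Φ) z (ξ, ζ) (ξ, ζ) := by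
  have h₁ : IsSuperjet (-W₁) z.1 (-fderiv ℝ W₁ z.1) (-fderiv ℝ (fderiv ℝ W₁) z.1) :=
    isSuperjet_of_hasFDerivAt (.of_forall fun y => (hW₁ y).hasFDerivAt.neg) hX.hasFDerivAt.neg
  have h₂ : IsSuperjet (-W₂) z.2 (-fderiv ℝ W₂ z.2) (-fderiv ℝ (fderiv ℝ W₂) z.2) :=
    isSuperjet_of_hasFDerivAt (.of_forall fun y => (hW₂ y).hasFDerivAt.neg) hY.hasFDerivAt.neg
  have h₃ : IsSuperjet Φ z (fderiv ℝ Φ z) (fderiv ℝ (fderiv ℝ Φ) z) :=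
    isSuperjet_of_hasFDerivAt
      ((hΦ.eventually (by simp)).mono fun y hy => (hy.differentiableAt (by simp)).hasFDerivAt)
      ((hΦ.fderiv_right (m := 1) (by norm_num)).differentiableAt (by simp)).hasFDerivAt
  have hℓ : IsSuperjet ℓ z ℓ 0 :=
    isSuperjet_of_hasFDerivAt (.of_forall fun y => ℓ.hasFDerivAt) (hasFDerivAt_const ℓ z)
  have hsum := ((((IsSuperjet.comp_continuousLinearMap (T := .fst ℝ E F) h₁).add
    (IsSuperjet.comp_continuousLinearMap (T := .snd ℝ E F) h₂)).add h₃).add hℓ)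
  have hmin := (hsum.eq_zero_and_nonneg_of_isLocalMin
    (hmax.neg.congr (.of_forall fun y => by simp; ring))).2 (ξ, ζ)
  simp only [_root_.add_apply, _root_.neg_apply, ContinuousLinearMap.bilinearComp_apply,
    ContinuousLinearMap.coe_fst', ContinuousLinearMap.coe_snd', _root_.zero_apply] at hmin
  linarith

lemma locallyLipschitzOn_coprod_sub_fderiv {P₁ : E → E →L[ℝ] ℝ} {P₂ : F → F →L[ℝ] ℝ}
    {K₁ K₂ : ℝ≥0} (h₁ : LipschitzWith K₁ P₁) (h₂ : LipschitzWith K₂ P₂) {Φ : E × F → ℝ}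
    {s : Set (E × F)} (hΦ : ∀ z ∈ s, ContDiffAt ℝ 2 Φ z) :
    LocallyLipschitzOn s fun z => (P₁ z.1).coprod (P₂ z.2) - fderiv ℝ Φ z := by
  have hfst := ((ContinuousLinearMap.compL ℝ (E × F) E ℝ).flip (.fst ℝ E F)).lipschitz.comp
    (h₁.comp (LipschitzWith.prod_fst (α := E) (β := F)))
  have hsnd := ((ContinuousLinearMap.compL ℝ (E × F) F ℝ).flip (.snd ℝ E F)).lipschitz.comp
    (h₂.comp (LipschitzWith.prod_snd (α := E) (β := F)))
  have hadd : LocallyLipschitz fun z : E × F => P₁ z.1 ∘L .fst ℝ E F + P₂ z.2 ∘L .snd ℝ E F :=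
    (hfst.add hsnd).locallyLipschitz
  have hcoprod (p : E →L[ℝ] ℝ) (q : F →L[ℝ] ℝ) :
      p.coprod q = p ∘L .fst ℝ E F + q ∘L .snd ℝ E F := by ext <;> simp
  simp only [hcoprod]
  refine hadd.locallyLipschitzOn.sub fun z hz => ?_
  obtain ⟨K, t, ht, hK⟩ :=
    ((hΦ z hz).fderiv_right (m := 1) (by norm_num)).exists_lipschitzOnWith
  exact ⟨K, t, mem_nhdsWithin_of_mem_nhds ht, hK⟩

lemma exists_hessian_add_le [FiniteDimensional ℝ E] [FiniteDimensional ℝ F] {W₁ : E → ℝ}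
    {W₂ : F → ℝ} {K₁ K₂ : ℝ≥0} (hW₁ : HasQuadraticRemainder W₁ (fderiv ℝ W₁) K₁)
    (hW₂ : HasQuadraticRemainder W₂ (fderiv ℝ W₂) K₂) {Φ : E × F → ℝ} {K : Set (E × F)}
    (hK : IsCompact K) (hΦ : ∀ z ∈ K, ContDiffAt ℝ 2 Φ z) {z₀ : E × F} (hz₀ : z₀ ∈ K)
    (hlt : ∀ z ∈ K \ interior K, W₁ z.1 + W₂ z.2 - Φ z < W₁ z₀.1 + W₂ z₀.2 - Φ z₀) {ε : ℝ}
    (hε : 0 < ε) :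
    ∃ z ∈ K, DifferentiableAt ℝ (fderiv ℝ W₁) z.1 ∧ DifferentiableAt ℝ (fderiv ℝ W₂) z.2 ∧
      ‖(fderiv ℝ W₁ z.1).coprod (fderiv ℝ W₂ z.2) - fderiv ℝ Φ z‖ < ε ∧
      ∀ ξ ζ, fderiv ℝ (fderiv ℝ W₁) z.1 ξ ξ + fderiv ℝ (fderiv ℝ W₂) z.2 ζ ζ ≤
        fderiv ℝ (fderiv ℝ Φ) z (ξ, ζ) (ξ, ζ) := by
  borelize E F
  have hd₁ : Differentiable ℝ W₁ := fun x => (hW₁.hasFDerivAt x).differentiableAt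
  have hd₂ : Differentiable ℝ W₂ := fun x => (hW₂.hasFDerivAt x).differentiableAt
  have hae₁ : ∀ᵐ z ∂(Measure.addHaar : Measure E).prod (Measure.addHaar : Measure F),
      DifferentiableAt ℝ (fderiv ℝ W₁) z.1 :=
    Measure.quasiMeasurePreserving_fst.ae hW₁.lipschitzWith.ae_differentiableAt
  have hae₂ : ∀ᵐ z ∂(Measure.addHaar : Measure E).prod (Measure.addHaar : Measure F),
      DifferentiableAt ℝ (fderiv ℝ W₂) z.2 :=
    Measure.quasiMeasurePreserving_snd.ae hW₂.lipschitzWith.ae_differentiableAt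
  have hder : ∀ z ∈ K, HasFDerivAt (fun z => W₁ z.1 + W₂ z.2 - Φ z)
      ((fderiv ℝ W₁ z.1).coprod (fderiv ℝ W₂ z.2) - fderiv ℝ Φ z) z := fun z hz =>
    ((((hW₁.hasFDerivAt z.1).comp z hasFDerivAt_fst).add
      ((hW₂.hasFDerivAt z.2).comp z hasFDerivAt_snd)).sub
      ((hΦ z hz).differentiableAt (by simp)).hasFDerivAt)
  obtain ⟨z, hz, ⟨hX, hY⟩, hgrad, hmax⟩ := exists_isLocalMax_sub_fderiv_of_ae
    (Measure.prod Measure.addHaar Measure.addHaar) hK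
    (fun z hz => (hder z hz).continuousAt.continuousWithinAt)
    (fun z hz => hder z (interior_subset hz))
    (locallyLipschitzOn_coprod_sub_fderiv hW₁.lipschitzWith hW₂.lipschitzWith
      fun z hz => hΦ z (interior_subset hz)) hz₀ hlt (hae₁.and hae₂) hε
  exact ⟨z, interior_subset hz, hX, hY, hgrad, hessian_add_le_of_isLocalMax hd₁ hd₂ hX hY
    (hΦ z (interior_subset hz)) hmax⟩

end SmoothSums

section TheoremOnSums

variable {E F : Type*} [NormedAddCommGroup E] [InnerProductSpace ℝ E] [FiniteDimensional ℝ E]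
  [NormedAddCommGroup F] [InnerProductSpace ℝ F] [FiniteDimensional ℝ F]

lemma eventually_lasryLions_lt {v : E → ℝ} {N : ℝ} (hv : Continuous v) (hN : ∀ x, |v x| ≤ N)
    {K : Set E} (hK : IsCompact K) {δ : ℝ} (hδ : 0 < δ) :
    ∀ᶠ κ in atTop, ∀ x ∈ K, lasryLions v κ x < v x + δ := by
  obtain ⟨ρ, hρ, hclose⟩ := Metric.mem_uniformity_dist.1 <|
    hK.uniformContinuousAt_of_continuousAt v (fun x _ => hv.continuousAt) (dist_mem_uniformity hδ)
  filter_upwards [eventually_gt_atTop 0, eventually_gt_atTop (2 * N / ρ ^ 2)] with κ hκ hκρ x hx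
  obtain ⟨z, hz, hle⟩ := exists_lasryLions_le hv hN hκ x
  rw [div_lt_iff₀ (by positivity)] at hκρ
  have hzx : ‖x - z‖ < ρ := by
    rw [norm_sub_rev]
    exact lt_of_pow_lt_pow_left₀ 2 hρ.le (lt_of_mul_lt_mul_left (hz.trans_lt hκρ) hκ.le)
  have hvz : |v x - v z| < δ := by
    simpa [Real.dist_eq] using hclose (by rwa [dist_eq_norm]) hx
  linarith [neg_lt_of_abs_lt hvz]

lemma eventually_lasryLions_add_lt {w₁ : E → ℝ} {w₂ : F → ℝ} {N : ℝ} (hw₁ : Continuous w₁)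
    (hN₁ : ∀ x, |w₁ x| ≤ N) (hw₂ : Continuous w₂) (hN₂ : ∀ y, |w₂ y| ≤ N) {Φ : E × F → ℝ}
    {K : Set (E × F)} (hK : IsCompact K) (hΦ : ContinuousOn Φ K) {z₀ : E × F}
    (hlt : ∀ z ∈ K, w₁ z.1 + w₂ z.2 - Φ z < w₁ z₀.1 + w₂ z₀.2 - Φ z₀) :
    ∀ᶠ κ in atTop, ∀ z ∈ K, lasryLions w₁ κ z.1 + lasryLions w₂ κ z.2 - Φ z <
      lasryLions w₁ κ z₀.1 + lasryLions w₂ κ z₀.2 - Φ z₀ := by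
  obtain ⟨δ, hδ, hgap⟩ := hK.exists_forall_le'
    (f := fun z => (w₁ z₀.1 + w₂ z₀.2 - Φ z₀) - (w₁ z.1 + w₂ z.2 - Φ z))
    (continuousOn_const.sub ((by fun_prop : Continuous fun z : E × F =>
      w₁ z.1 + w₂ z.2).continuousOn.sub hΦ)) (a := 0) fun z hz => sub_pos.2 (hlt z hz)
  filter_upwards [eventually_gt_atTop 0,
    eventually_lasryLions_lt hw₁ hN₁ (hK.image continuous_fst) (half_pos hδ),
    eventually_lasryLions_lt hw₂ hN₂ (hK.image continuous_snd) (half_pos hδ)]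
    with κ hκ hlt₁ hlt₂ z hz
  linarith [hgap z hz, hlt₁ z.1 (mem_image_of_mem _ hz), hlt₂ z.2 (mem_image_of_mem _ hz),
    le_lasryLions hw₁ hN₁ hκ z₀.1, le_lasryLions hw₂ hN₂ hκ z₀.2]

lemma exists_hessian_le_of_isCompact {G : Type*} [NormedAddCommGroup G] [NormedSpace ℝ G]
    {Φ : G → ℝ} {K : Set G} (hK : IsCompact K) (hΦ : ∀ z ∈ K, ContDiffAt ℝ 2 Φ z) :
    ∃ c, ∀ z ∈ K, ∀ v, fderiv ℝ (fderiv ℝ Φ) z v v ≤ c * ‖v‖ ^ 2 := by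
  obtain ⟨c, hc⟩ := hK.exists_bound_of_continuousOn (f := fderiv ℝ (fderiv ℝ Φ)) fun z hz =>
    (((hΦ z hz).fderiv_right (m := 1) (by norm_num)).fderiv_right (m := 0)
      (by norm_num)).continuousAt.continuousWithinAt
  refine ⟨c, fun z hz v => ?_⟩
  calc _ ≤ ‖fderiv ℝ (fderiv ℝ Φ) z‖ * ‖v‖ * ‖v‖ :=
        (Real.le_norm_self _).trans (ContinuousLinearMap.le_opNorm₂ _ _ _)
    _ ≤ c * ‖v‖ ^ 2 := by rw [mul_assoc, ← sq]; gcongr; exact hc z hz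

lemma exists_isSuperjet_of_abs_le {w₁ : E → ℝ} {w₂ : F → ℝ} {N : ℝ} (hw₁ : Continuous w₁)
    (hN₁ : ∀ x, |w₁ x| ≤ N) (hw₂ : Continuous w₂) (hN₂ : ∀ y, |w₂ y| ≤ N) {Φ : E × F → ℝ}
    {K : Set (E × F)} (hK : IsCompact K) (hΦ : ∀ z ∈ K, ContDiffAt ℝ 2 Φ z) {z₀ : E × F}
    (hz₀ : z₀ ∈ K)
    (hlt : ∀ z ∈ K \ interior K, w₁ z.1 + w₂ z.2 - Φ z < w₁ z₀.1 + w₂ z₀.2 - Φ z₀) {ε : ℝ}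
    (hε : 0 < ε) :
    ∃ z ∈ K, ∃ x y p q X Y, ‖x - z.1‖ ≤ ε ∧ ‖y - z.2‖ ≤ ε ∧ IsSuperjet w₁ x p X ∧
      IsSuperjet w₂ y q Y ∧ ‖p.coprod q - fderiv ℝ Φ z‖ < ε ∧
      ∀ ξ ζ, X ξ ξ + Y ζ ζ ≤ fderiv ℝ (fderiv ℝ Φ) z (ξ, ζ) (ξ, ζ) := by
  obtain ⟨c, hc⟩ := exists_hessian_le_of_isCompact hK hΦ
  obtain ⟨κ, hκ, hcκ, hNκ, hltκ⟩ := ((eventually_gt_atTop 0).and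
    ((eventually_gt_atTop (c / 4)).and ((eventually_ge_atTop (2 * N / ε ^ 2)).and
    (eventually_lasryLions_add_lt hw₁ hN₁ hw₂ hN₂ (hK.diff isOpen_interior)
      (fun z hz => (hΦ z hz.1).continuousAt.continuousWithinAt) hlt)))).exists
  have hcκ' : c < 4 * κ := by linarith
  have hd₁ := hasQuadraticRemainder_lasryLions hw₁ hN₁ hκ
  have hd₂ := hasQuadraticRemainder_lasryLions hw₂ hN₂ hκ
  obtain ⟨z, hz, hX, hY, hgrad, hhess⟩ := exists_hessian_add_le hd₁ hd₂ hK hΦ hz₀ hltκ hε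
  have hclose {t : ℝ} (ht : κ * t ^ 2 ≤ 2 * N) : t ≤ ε :=
    le_of_sq_le_sq (le_of_mul_le_mul_left (ht.trans ((div_le_iff₀ (by positivity)).1 hNκ)) hκ) hε.le
  obtain ⟨x, hx, hjet₁⟩ := IsSuperjet.of_lasryLions hw₁ hN₁ hκ hcκ'
    (fun ξ => by simpa using (hhess ξ 0).trans (hc z hz (ξ, 0)))
    (isSuperjet_of_hasFDerivAt (.of_forall hd₁.hasFDerivAt) hX.hasFDerivAt)
  obtain ⟨y, hy, hjet₂⟩ := IsSuperjet.of_lasryLions hw₂ hN₂ hκ hcκ'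
    (fun ζ => by simpa using (hhess 0 ζ).trans (hc z hz (0, ζ)))
    (isSuperjet_of_hasFDerivAt (.of_forall hd₂.hasFDerivAt) hY.hasFDerivAt)
  exact ⟨z, hz, x, y, _, _, _, _, hclose hx, hclose hy, hjet₁, hjet₂, hgrad, hhess⟩

lemma max_neg_min_of_abs_lt {N t : ℝ} (ht : |t| < N) : max (-N) (min N t) = t := by
  rw [abs_lt] at ht
  rw [min_eq_right ht.2.le, max_eq_right ht.1.le]

omit [FiniteDimensional ℝ E] in
lemma IsSuperjet.of_max_min {w : E → ℝ} {N : ℝ} (hw : Continuous w) {x : E} (hx : |w x| < N)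
    {p : E →L[ℝ] ℝ} {X : E →L[ℝ] E →L[ℝ] ℝ}
    (h : IsSuperjet (fun z => max (-N) (min N (w z))) x p X) : IsSuperjet w x p X := by
  refine h.congr ?_
  filter_upwards [hw.abs.continuousAt.eventually_lt_const hx] with y hy
  exact max_neg_min_of_abs_lt hy

lemma exists_forall_abs_lt_of_norm_sub_le {w : E → ℝ} (hw : Continuous w) {K : Set E}
    (hK : IsCompact K) (ε : ℝ) : ∃ N, ∀ x ∈ K, ∀ y, ‖y - x‖ ≤ ε → |w y| < N := by
  have : ProperSpace E := FiniteDimensional.proper_real E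
  obtain ⟨N, hN⟩ := (hK.cthickening (r := ε)).exists_bound_of_continuousOn hw.continuousOn
  refine ⟨N + 1, fun x hx y hy => (hN y ?_).trans_lt (lt_add_one N)⟩
  exact mem_cthickening_of_dist_le y x ε K hx (by rwa [dist_eq_norm])

-- Crandall–Ishii: the theorem on sums, with approximate first-order conditions.
theorem exists_isSuperjet_of_isCompact {w₁ : E → ℝ} {w₂ : F → ℝ} (hw₁ : Continuous w₁)
    (hw₂ : Continuous w₂) {Φ : E × F → ℝ} {K : Set (E × F)} (hK : IsCompact K)
    (hΦ : ∀ z ∈ K, ContDiffAt ℝ 2 Φ z) {z₀ : E × F} (hz₀ : z₀ ∈ K)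
    (hlt : ∀ z ∈ K \ interior K, w₁ z.1 + w₂ z.2 - Φ z < w₁ z₀.1 + w₂ z₀.2 - Φ z₀) {ε : ℝ}
    (hε : 0 < ε) :
    ∃ z ∈ K, ∃ x y p q X Y, IsSuperjet w₁ x p X ∧ IsSuperjet w₂ y q Y ∧
      ‖p.coprod q - fderiv ℝ Φ z‖ < ε ∧
      ∀ ξ ζ, X ξ ξ + Y ζ ζ ≤ fderiv ℝ (fderiv ℝ Φ) z (ξ, ζ) (ξ, ζ) := by
  obtain ⟨N₁, hN₁⟩ := exists_forall_abs_lt_of_norm_sub_le hw₁ (hK.image continuous_fst) ε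
  obtain ⟨N₂, hN₂⟩ := exists_forall_abs_lt_of_norm_sub_le hw₂ (hK.image continuous_snd) ε
  set N := max N₁ N₂
  have hlt₁ (z) (hz : z ∈ K) (x : E) (hx : ‖x - z.1‖ ≤ ε) : |w₁ x| < N :=
    (hN₁ _ (mem_image_of_mem _ hz) _ hx).trans_le (le_max_left _ _)
  have hlt₂ (z) (hz : z ∈ K) (y : F) (hy : ‖y - z.2‖ ≤ ε) : |w₂ y| < N :=
    (hN₂ _ (mem_image_of_mem _ hz) _ hy).trans_le (le_max_right _ _)
  have hN : 0 ≤ N := (abs_nonneg _).trans (hlt₁ z₀ hz₀ z₀.1 (by simpa using hε.le)).le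
  have habs (t : ℝ) : |max (-N) (min N t)| ≤ N :=
    abs_le.2 ⟨le_max_left _ _, max_le (by linarith) (min_le_left _ _)⟩
  have hsum (z) (hz : z ∈ K) :
      max (-N) (min N (w₁ z.1)) + max (-N) (min N (w₂ z.2)) = w₁ z.1 + w₂ z.2 := by
    rw [max_neg_min_of_abs_lt (hlt₁ z hz z.1 (by simpa using hε.le)),
      max_neg_min_of_abs_lt (hlt₂ z hz z.2 (by simpa using hε.le))]
  obtain ⟨z, hz, x, y, p, q, X, Y, hx, hy, hX, hY, hgrad, hhess⟩ :=
    exists_isSuperjet_of_abs_le (w₁ := fun x => max (-N) (min N (w₁ x)))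
      (w₂ := fun y => max (-N) (min N (w₂ y))) (by fun_prop) (fun x => habs _) (by fun_prop)
      (fun y => habs _) hK hΦ hz₀ (fun z hz => by
        rw [hsum z hz.1, hsum z₀ hz₀]
        exact hlt z hz) hε
  exact ⟨z, hz, x, y, p, q, X, Y, hX.of_max_min hw₁ (hlt₁ z hz x hx),
    hY.of_max_min hw₂ (hlt₂ z hz y hy), hgrad, hhess⟩

end TheoremOnSums

section Penalty

lemma fderiv_fderiv_apply_self_of_hasLineDerivAt {F : Type*} [NormedAddCommGroup F]
    [NormedSpace ℝ F] {f : F → ℝ} {g : F → ℝ} {g' : ℝ} {z v : F} (hf : ContDiffAt ℝ 2 f z)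
    (hg : ∀ᶠ w in 𝓝 z, fderiv ℝ f w v = g w) (hg' : HasLineDerivAt ℝ g g' z v) :
    fderiv ℝ (fderiv ℝ f) z v v = g' := by
  have hdiff : HasFDerivAt (fun w => fderiv ℝ f w v) ((fderiv ℝ (fderiv ℝ f) z).flip v) z := by
    simpa using ((hf.fderiv_right (m := 1) (by norm_num)).differentiableAt
      (by simp)).hasFDerivAt.clm_apply (hasFDerivAt_const v z)
  have hline := (hdiff.congr_of_eventuallyEq (hg.mono fun _ h => h.symm)).hasLineDerivAt v
  exact hline.lineDeriv.symm.trans hg'.lineDeriv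

variable {E : Type*} [NormedAddCommGroup E] {L : ℝ} {z : E × E}

/-- The doubling penalty `L (‖x - y‖ / (1 - ‖x‖ ^ 2)) ^ (1 / 8)` at `z = (x, y)`, written through
its logarithm so that it is easy to differentiate. -/
noncomputable def penalty (L : ℝ) (z : E × E) : ℝ :=
  L * Real.exp (1 / 8 * (1 / 2 * Real.log (‖z.1 - z.2‖ ^ 2) - Real.log (1 - ‖z.1‖ ^ 2)))

/-- The pairs `(x, y)` at which `penalty` is given by a smooth formula without junk values. -/
def penaltyDomain (E : Type*) [NormedAddCommGroup E] : Set (E × E) :=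
  {z | z.1 ≠ z.2 ∧ ‖z.1‖ < 1}

/-- The quotient raised to the power `1 / 8` in `penalty`. -/
noncomputable def penaltyRatio (z : E × E) : ℝ := ‖z.1 - z.2‖ / (1 - ‖z.1‖ ^ 2)

lemma isOpen_penaltyDomain : IsOpen (penaltyDomain E) :=
  (isOpen_ne_fun continuous_fst continuous_snd).inter
    (isOpen_lt continuous_fst.norm continuous_const)

lemma norm_sub_pos_of_mem_penaltyDomain (hz : z ∈ penaltyDomain E) : 0 < ‖z.1 - z.2‖ :=
  norm_sub_pos_iff.2 hz.1

lemma one_sub_norm_sq_pos_of_mem_penaltyDomain (hz : z ∈ penaltyDomain E) :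
    0 < 1 - ‖z.1‖ ^ 2 :=
  sub_pos.2 ((sq_lt_one_iff₀ (norm_nonneg _)).2 hz.2)

lemma penalty_pos (hL : 0 < L) (z : E × E) : 0 < penalty L z :=
  mul_pos hL (Real.exp_pos _)

lemma penalty_pow_eight (L : ℝ) (hz : z ∈ penaltyDomain E) :
    penalty L z ^ 8 = L ^ 8 * penaltyRatio z := by
  have hlog : ((8 : ℕ) : ℝ) * (1 / 8 * (1 / 2 * Real.log (‖z.1 - z.2‖ ^ 2) -
      Real.log (1 - ‖z.1‖ ^ 2))) = Real.log ‖z.1 - z.2‖ - Real.log (1 - ‖z.1‖ ^ 2) := by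
    rw [Real.log_pow]
    push_cast
    ring
  rw [penalty, mul_pow, ← Real.exp_nat_mul, hlog, Real.exp_sub,
    Real.exp_log (norm_sub_pos_of_mem_penaltyDomain hz),
    Real.exp_log (one_sub_norm_sq_pos_of_mem_penaltyDomain hz), penaltyRatio]

lemma penaltyRatio_nonneg (hz : z ∈ penaltyDomain E) : 0 ≤ penaltyRatio z :=
  div_nonneg (norm_nonneg _) (one_sub_norm_sq_pos_of_mem_penaltyDomain hz).le

lemma penaltyRatio_le_of_penalty_le (hL : 0 < L) (hz : z ∈ penaltyDomain E) {M : ℝ}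
    (hM : penalty L z ≤ M) : penaltyRatio z ≤ (M / L) ^ 8 := by
  have hpow := pow_le_pow_left₀ (penalty_pos hL z).le hM 8
  rwa [penalty_pow_eight L hz, ← le_div_iff₀' (by positivity), ← div_pow] at hpow

lemma norm_sub_le_of_penalty_le (hL : 0 < L) (hz : z ∈ penaltyDomain E) {M : ℝ}
    (hM : penalty L z ≤ M) : ‖z.1 - z.2‖ ≤ (M / L) ^ 8 * (1 - ‖z.1‖ ^ 2) :=
  (div_le_iff₀ (one_sub_norm_sq_pos_of_mem_penaltyDomain hz)).1
    (penaltyRatio_le_of_penalty_le hL hz hM)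

variable [InnerProductSpace ℝ E]

lemma contDiffAt_penalty {m : ℕ∞} (L : ℝ) (hz : z ∈ penaltyDomain E) :
    ContDiffAt ℝ m (penalty L) z := by
  have hsub : ContDiffAt ℝ m (fun z : E × E => Real.log (‖z.1 - z.2‖ ^ 2)) z :=
    ((contDiffAt_fst.sub contDiffAt_snd).norm_sq ℝ).log
      (pow_pos (norm_sub_pos_of_mem_penaltyDomain hz) 2).ne'
  have hfst : ContDiffAt ℝ m (fun z : E × E => Real.log (1 - ‖z.1‖ ^ 2)) z :=
    (contDiffAt_const.sub (contDiffAt_fst.norm_sq ℝ)).log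
      (one_sub_norm_sq_pos_of_mem_penaltyDomain hz).ne'
  exact contDiffAt_const.mul
    (contDiffAt_const.mul ((contDiffAt_const.mul hsub).sub hfst)).exp

lemma continuousOn_penalty (L : ℝ) : ContinuousOn (penalty L) (penaltyDomain E) :=
  fun _ hz => (contDiffAt_penalty (m := 0) L hz).continuousAt.continuousWithinAt

/-- The derivative of `log (penalty ^ 8)` at `z` in the direction `v`. -/
noncomputable def logPenaltyDeriv (z v : E × E) : ℝ :=
  ⟪z.1 - z.2, v.1 - v.2⟫_ℝ / ‖z.1 - z.2‖ ^ 2 + 2 * ⟪z.1, v.1⟫_ℝ / (1 - ‖z.1‖ ^ 2)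

lemma hasDerivAt_norm_sq_add_smul (x ξ : E) (t : ℝ) :
    HasDerivAt (fun t : ℝ => ‖x + t • ξ‖ ^ 2) (2 * ⟪x + t • ξ, ξ⟫_ℝ) t := by
  simpa using (((hasDerivAt_id t).smul_const ξ).const_add x).norm_sq

lemma hasDerivAt_inner_add_smul (x ξ : E) (t : ℝ) :
    HasDerivAt (fun t : ℝ => ⟪x + t • ξ, ξ⟫_ℝ) (‖ξ‖ ^ 2) t := by
  simpa using (((hasDerivAt_id t).smul_const ξ).const_add x).inner ℝ (hasDerivAt_const t ξ)

lemma hasDerivAt_penalty_add_smul (L : ℝ) (v : E × E) {t : ℝ}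
    (hz : z + t • v ∈ penaltyDomain E) :
    HasDerivAt (fun t : ℝ => penalty L (z + t • v))
      (penalty L (z + t • v) / 8 * logPenaltyDeriv (z + t • v) v) t := by
  have hline (t : ℝ) : (z + t • v).1 - (z + t • v).2 = (z.1 - z.2) + t • (v.1 - v.2) := by
    simp only [Prod.fst_add, Prod.snd_add, Prod.smul_fst, Prod.smul_snd]
    module
  have hr := (pow_pos (norm_sub_pos_of_mem_penaltyDomain hz) 2).ne'
  have hd := (one_sub_norm_sq_pos_of_mem_penaltyDomain hz).ne'
  simp only [penalty, logPenaltyDeriv, hline] at hr ⊢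
  have hlog₁ := (hasDerivAt_norm_sq_add_smul (z.1 - z.2) (v.1 - v.2) t).log hr
  have hlog₂ := ((hasDerivAt_norm_sq_add_smul z.1 v.1 t).const_sub 1).log hd
  refine ((((hlog₁.const_mul (1 / 2)).sub hlog₂).const_mul (1 / 8)).exp.const_mul L).congr_deriv ?_
  simp only [Pi.sub_apply, Prod.fst_add, Prod.smul_fst]
  ring

lemma hasDerivAt_logPenaltyDeriv_add_smul (v : E × E) (hz : z ∈ penaltyDomain E) :
    HasDerivAt (fun t : ℝ => logPenaltyDeriv (z + t • v) v)
      (‖v.1 - v.2‖ ^ 2 / ‖z.1 - z.2‖ ^ 2 -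
        2 * ⟪z.1 - z.2, v.1 - v.2⟫_ℝ ^ 2 / (‖z.1 - z.2‖ ^ 2) ^ 2 +
        2 * ‖v.1‖ ^ 2 / (1 - ‖z.1‖ ^ 2) + 4 * ⟪z.1, v.1⟫_ℝ ^ 2 / (1 - ‖z.1‖ ^ 2) ^ 2) 0 := by
  have hline (t : ℝ) : (z + t • v).1 - (z + t • v).2 = (z.1 - z.2) + t • (v.1 - v.2) := by
    simp only [Prod.fst_add, Prod.snd_add, Prod.smul_fst, Prod.smul_snd]
    module
  have hr := (pow_pos (norm_sub_pos_of_mem_penaltyDomain hz) 2).ne'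
  have hd := (one_sub_norm_sq_pos_of_mem_penaltyDomain hz).ne'
  simp only [logPenaltyDeriv, hline]
  refine (((hasDerivAt_inner_add_smul (z.1 - z.2) (v.1 - v.2) 0).div
    (hasDerivAt_norm_sq_add_smul (z.1 - z.2) (v.1 - v.2) 0) (by rwa [zero_smul, add_zero])).add
    (((hasDerivAt_inner_add_smul z.1 v.1 0).const_mul 2).div
      ((hasDerivAt_norm_sq_add_smul z.1 v.1 0).const_sub 1)
      (by rwa [zero_smul, add_zero]))).congr_deriv ?_
  simp only [zero_smul, add_zero]
  field_simp
  ring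

lemma fderiv_penalty_apply (L : ℝ) (hz : z ∈ penaltyDomain E) (v : E × E) :
    fderiv ℝ (penalty L) z v = penalty L z / 8 * logPenaltyDeriv z v := by
  have hline : HasLineDerivAt ℝ (penalty L) (penalty L z / 8 * logPenaltyDeriv z v) z v := by
    simpa [HasLineDerivAt] using
      hasDerivAt_penalty_add_smul L v (t := 0) (by rwa [zero_smul, add_zero])
  rw [← hline.lineDeriv]
  exact (((contDiffAt_penalty (m := 1) L hz).differentiableAt (by simp)).lineDeriv_eq_fderiv).symm

lemma fderiv_fderiv_penalty_apply (L : ℝ) (hz : z ∈ penaltyDomain E) (v : E × E) :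
    fderiv ℝ (fderiv ℝ (penalty L)) z v v = penalty L z / 8 *
      (‖v.1 - v.2‖ ^ 2 / ‖z.1 - z.2‖ ^ 2 -
        2 * ⟪z.1 - z.2, v.1 - v.2⟫_ℝ ^ 2 / (‖z.1 - z.2‖ ^ 2) ^ 2 +
        2 * ‖v.1‖ ^ 2 / (1 - ‖z.1‖ ^ 2) + 4 * ⟪z.1, v.1⟫_ℝ ^ 2 / (1 - ‖z.1‖ ^ 2) ^ 2 +
        1 / 8 * logPenaltyDeriv z v ^ 2) := by
  have hz₀ : z + (0 : ℝ) • v = z := by rw [zero_smul, add_zero]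
  have hfst := (hasDerivAt_penalty_add_smul L v (t := 0) (by rwa [hz₀])).div_const 8
  have hsnd : HasLineDerivAt ℝ (fun w => penalty L w / 8 * logPenaltyDeriv w v) _ z v :=
    hfst.mul (hasDerivAt_logPenaltyDeriv_add_smul v hz)
  rw [fderiv_fderiv_apply_self_of_hasLineDerivAt (contDiffAt_penalty (m := 2) L hz)
    ((isOpen_penaltyDomain.eventually_mem hz).mono fun w hw => fderiv_penalty_apply L hw v) hsnd,
    hz₀]
  ring

/-- The unit vector in the direction of `x - y` at `z = (x, y)`. -/
noncomputable def penaltyDir (z : E × E) : E := ‖z.1 - z.2‖⁻¹ • (z.1 - z.2)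

/-- The contribution of the factor `1 - ‖x‖ ^ 2` to the gradient of `penalty` at `z = (x, y)`,
multiplied by `8 ‖x - y‖ / penalty`. -/
noncomputable def radialForm (z : E × E) : E →L[ℝ] ℝ := (2 * penaltyRatio z) • innerSL ℝ z.1

lemma norm_penaltyDir (hz : z ∈ penaltyDomain E) : ‖penaltyDir z‖ = 1 := by
  rw [penaltyDir, norm_smul, norm_inv, norm_norm,
    inv_mul_cancel₀ (norm_sub_pos_of_mem_penaltyDomain hz).ne']

lemma abs_radialForm_apply_le (hz : z ∈ penaltyDomain E) (ξ : E) :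
    |radialForm z ξ| ≤ 2 * penaltyRatio z * ‖ξ‖ := by
  have hδ := penaltyRatio_nonneg hz
  rw [radialForm, _root_.smul_apply, innerSL_apply_apply, smul_eq_mul, abs_mul,
    abs_of_nonneg (by positivity)]
  gcongr
  exact (abs_real_inner_le_norm _ _).trans (mul_le_of_le_one_left (norm_nonneg _) hz.2.le)

lemma fderiv_penalty_apply_eq (L : ℝ) (hz : z ∈ penaltyDomain E) (v : E × E) :
    fderiv ℝ (penalty L) z v = penalty L z / 8 / ‖z.1 - z.2‖ *
      (⟪penaltyDir z, v.1 - v.2⟫_ℝ + radialForm z v.1) := by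
  have hr := (norm_sub_pos_of_mem_penaltyDomain hz).ne'
  have hd := (one_sub_norm_sq_pos_of_mem_penaltyDomain hz).ne'
  rw [fderiv_penalty_apply L hz, logPenaltyDeriv, penaltyDir, radialForm, penaltyRatio,
    _root_.smul_apply, innerSL_apply_apply, smul_eq_mul, real_inner_smul_left]
  field_simp

/-- A bound for the Hessian of `penalty` at `z` after division by `penalty / (8 ‖x - y‖ ^ 2)`, when
`e = penaltyDir z`, `θ = radialForm z` and `δ = penaltyRatio z`. -/
noncomputable def hessianModel (e : E) (θ : E →L[ℝ] ℝ) (δ : ℝ) (ξ ζ : E) : ℝ :=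
  ‖ξ - ζ‖ ^ 2 - 2 * ⟪e, ξ - ζ⟫_ℝ ^ 2 + 2 * δ ^ 2 * ‖ξ‖ ^ 2 + θ ξ ^ 2 +
    1 / 8 * (⟪e, ξ - ζ⟫_ℝ + θ ξ) ^ 2

lemma fderiv_fderiv_penalty_le (hL : 0 < L) (hz : z ∈ penaltyDomain E) (ξ ζ : E) :
    fderiv ℝ (fderiv ℝ (penalty L)) z (ξ, ζ) (ξ, ζ) ≤ penalty L z / 8 / ‖z.1 - z.2‖ ^ 2 *
      hessianModel (penaltyDir z) (radialForm z) (penaltyRatio z) ξ ζ := by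
  rw [fderiv_fderiv_penalty_apply L hz, div_mul_eq_mul_div (penalty L z / 8),
    mul_div_assoc (penalty L z / 8)]
  have hr := norm_sub_pos_of_mem_penaltyDomain hz
  have hd := one_sub_norm_sq_pos_of_mem_penaltyDomain hz
  refine mul_le_mul_of_nonneg_left ?_ (div_nonneg (penalty_pos hL z).le (by norm_num))
  simp only [hessianModel, logPenaltyDeriv, penaltyDir, radialForm, penaltyRatio,
    real_inner_smul_left, _root_.smul_apply, innerSL_apply_apply, smul_eq_mul]
  generalize ‖z.1 - z.2‖ = r at *
  generalize hd' : 1 - ‖z.1‖ ^ 2 = d at *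
  generalize ⟪z.1 - z.2, ξ - ζ⟫_ℝ = A
  generalize ⟪z.1, ξ⟫_ℝ = B
  have hdd : 2 * ‖ξ‖ ^ 2 / d ≤ 2 * ‖ξ‖ ^ 2 / d ^ 2 :=
    div_le_div_of_nonneg_left (by positivity) (by positivity)
      (by nlinarith [sq_nonneg ‖z.1‖])
  have hexpand : (‖ξ - ζ‖ ^ 2 - 2 * (r⁻¹ * A) ^ 2 + 2 * (r / d) ^ 2 * ‖ξ‖ ^ 2 +
      (2 * (r / d) * B) ^ 2 + 1 / 8 * (r⁻¹ * A + 2 * (r / d) * B) ^ 2) / r ^ 2 =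
      ‖ξ - ζ‖ ^ 2 / r ^ 2 - 2 * A ^ 2 / (r ^ 2) ^ 2 + 2 * ‖ξ‖ ^ 2 / d ^ 2 + 4 * B ^ 2 / d ^ 2 +
        1 / 8 * (A / r ^ 2 + 2 * B / d) ^ 2 := by
    field_simp
    ring
  linarith

/-- The part of `penaltyDomain` where the doubled function `w x - w y - penalty L (x, y)` is at
least `m`. -/
def doublingSet (L m : ℝ) (w : E → ℝ) : Set (E × E) :=
  {z ∈ penaltyDomain E | m ≤ w z.1 - w z.2 - penalty L z}

lemma isCompact_doublingSet [ProperSpace E] {w : E → ℝ} (hw : Continuous w) (hw₀ : ∀ x, 0 ≤ w x)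
    (hL : 0 < L) {m : ℝ} (hm : 0 < m) : IsCompact (doublingSet L m w) := by
  obtain ⟨M, hM⟩ : ∃ M, ∀ x ∈ closedBall (0 : E) 1, w x ≤ M :=
    ((isCompact_closedBall 0 1).bddAbove_image hw.continuousOn).imp
      fun _ h => forall_mem_image.1 h
  set Q := (M / L) ^ 8
  have hQ : 0 ≤ Q := Even.pow_nonneg (by decide) _
  let C : Set (E × E) := {z | ‖z.1 - z.2‖ ≤ Q * (1 - ‖z.1‖ ^ 2)} ∩ {z | m ≤ w z.1 - w z.2}
  have hC : C ⊆ penaltyDomain E := by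
    rintro ⟨x, y⟩ ⟨hr : ‖x - y‖ ≤ Q * (1 - ‖x‖ ^ 2), hwm : m ≤ w x - w y⟩
    have hne : x ≠ y := fun h => by simp only [h, sub_self] at hwm; linarith
    have hd : 0 < 1 - ‖x‖ ^ 2 :=
      pos_of_mul_pos_right ((norm_sub_pos_iff.2 hne).trans_le hr) hQ
    exact ⟨hne, (sq_lt_one_iff₀ (norm_nonneg _)).1 (sub_pos.1 hd)⟩
  have hCclosed : IsClosed C :=
    (isClosed_le (by fun_prop) (by fun_prop)).inter (isClosed_le (by fun_prop) (by fun_prop))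
  have hCcompact : IsCompact C := by
    refine ((isCompact_closedBall 0 1).prod (isCompact_closedBall 0 (1 + Q))).of_isClosed_subset
      hCclosed fun z hz => ?_
    have hx := (hC hz).2.le
    have hr : ‖z.1 - z.2‖ ≤ Q := hz.1.trans (mul_le_of_le_one_right hQ (by simp))
    have hy := norm_sub_le z.1 (z.1 - z.2)
    rw [sub_sub_cancel] at hy
    exact ⟨by simpa using hx, by simpa using hy.trans (add_le_add hx hr)⟩
  have hsub : doublingSet L m w ⊆ C := fun z hz => by
    have hle := hz.2
    have hpos := penalty_pos hL z
    have hwM := hM z.1 (by simpa using hz.1.2.le)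
    exact ⟨norm_sub_le_of_penalty_le hL hz.1 (by linarith [hw₀ z.2]),
      show m ≤ w z.1 - w z.2 by linarith⟩
  refine hCcompact.of_isClosed_subset ?_ hsub
  have hcont : ContinuousOn (fun z => w z.1 - w z.2 - penalty L z) C :=
    ContinuousOn.sub (by fun_prop) ((continuousOn_penalty L).mono hC)
  convert hcont.preimage_isClosed_of_isClosed hCclosed isClosed_Ici using 1
  exact Subset.antisymm (fun z hz => ⟨hsub hz, hz.2⟩) fun z hz => ⟨hC hz.1, hz.2⟩

lemma le_of_mem_doublingSet_sdiff_interior {w : E → ℝ} (hw : Continuous w) {m : ℝ}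
    (hz : z ∈ doublingSet L m w \ interior (doublingSet L m w)) :
    w z.1 - w z.2 - penalty L z ≤ m := by
  by_contra! hlt
  have hcont : ContinuousAt (fun z => w z.1 - w z.2 - penalty L z) z :=
    (by fun_prop : Continuous fun z : E × E => w z.1 - w z.2).continuousAt.sub
      ((continuousOn_penalty L).continuousAt (isOpen_penaltyDomain.mem_nhds hz.1.1))
  refine hz.2 (mem_interior_iff_mem_nhds.2 ?_)
  filter_upwards [isOpen_penaltyDomain.mem_nhds hz.1.1, hcont.eventually_const_lt hlt] with y hy hm
  exact ⟨hy, hm.le⟩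

end Penalty

section MatrixInequality

lemma abs_add_sq_sub_sq_le {s t σ N : ℝ} (hs : |s| ≤ N) (ht : |t| ≤ σ * N) (hσ : 0 ≤ σ)
    (hσ₁ : σ ≤ 1) : |(s + t) ^ 2 - s ^ 2| ≤ 3 * σ * N ^ 2 := by
  have hN : 0 ≤ N := (abs_nonneg s).trans hs
  calc |(s + t) ^ 2 - s ^ 2| = |t| * |2 * s + t| := by rw [← abs_mul]; ring_nf
    _ ≤ σ * N * (3 * N) := by
        refine mul_le_mul ht ?_ (abs_nonneg _) (mul_nonneg hσ hN)
        calc |2 * s + t| ≤ 2 * |s| + |t| := by simpa [abs_mul] using abs_add_le (2 * s) t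
          _ ≤ 3 * N := by linarith [mul_le_of_le_one_left hN hσ₁]
    _ = 3 * σ * N ^ 2 := by ring

section Inner

variable {E : Type*} [NormedAddCommGroup E] [InnerProductSpace ℝ E] {e : E} {P Q θ : E →L[ℝ] ℝ}
  {δ σ G : ℝ}

lemma abs_inner_le_of_norm_eq_one (he : ‖e‖ = 1) (v : E) : |⟪e, v⟫_ℝ| ≤ ‖v‖ := by
  simpa [he] using abs_real_inner_le_norm e v

lemma hessianModel_zero_left (e : E) (θ : E →L[ℝ] ℝ) (δ : ℝ) (ζ : E) :
    hessianModel e θ δ 0 ζ = ‖ζ‖ ^ 2 - 15 / 8 * ⟪e, ζ⟫_ℝ ^ 2 := by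
  simp only [hessianModel, zero_sub, norm_neg, inner_neg_right, norm_zero, map_zero]
  ring

lemma abs_apply_sq_sub_inner_sq_le (he : ‖e‖ = 1) (hσ : 0 ≤ σ) (hσ₁ : σ ≤ 1) {v : E}
    (hP : |P v - ⟪e, v⟫_ℝ| ≤ σ * ‖v‖) : |P v ^ 2 - ⟪e, v⟫_ℝ ^ 2| ≤ 3 * σ * ‖v‖ ^ 2 := by
  simpa using abs_add_sq_sub_sq_le (abs_inner_le_of_norm_eq_one he v) hP hσ hσ₁

lemma hessianModel_le (he : ‖e‖ = 1) (hδ : 0 ≤ δ) (hδσ : δ ≤ σ) (hσ₁ : σ ≤ 1)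
    (hθ : ∀ v, |θ v| ≤ σ * ‖v‖) (ξ ζ : E) :
    hessianModel e θ δ ξ ζ ≤
      ‖ξ - ζ‖ ^ 2 - 15 / 8 * ⟪e, ξ - ζ⟫_ℝ ^ 2 + 4 * σ * (‖ξ‖ ^ 2 + ‖ζ‖ ^ 2) := by
  have hσ := hδ.trans hδσ
  have hcross : |(⟪e, ξ - ζ⟫_ℝ + θ ξ) ^ 2 - ⟪e, ξ - ζ⟫_ℝ ^ 2| ≤ 3 * σ * (‖ξ‖ + ‖ζ‖) ^ 2 := by
    refine abs_add_sq_sub_sq_le ((abs_inner_le_of_norm_eq_one he _).trans (norm_sub_le ξ ζ))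
      ((hθ ξ).trans ?_) hσ hσ₁
    gcongr
    exact le_add_of_nonneg_right (norm_nonneg ζ)
  have hsum : (‖ξ‖ + ‖ζ‖) ^ 2 ≤ 2 * (‖ξ‖ ^ 2 + ‖ζ‖ ^ 2) := add_sq_le
  have hδ_sq : δ ^ 2 ≤ σ := by nlinarith
  have hθ_sq : θ ξ ^ 2 ≤ σ * ‖ξ‖ ^ 2 := by
    calc θ ξ ^ 2 ≤ (σ * ‖ξ‖) ^ 2 := sq_le_sq' (abs_le.1 (hθ ξ)).1 (abs_le.1 (hθ ξ)).2
      _ = σ * (σ * ‖ξ‖ ^ 2) := by ring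
      _ ≤ σ * ‖ξ‖ ^ 2 := mul_le_of_le_one_left (by positivity) hσ₁
  rw [hessianModel]
  linarith [(abs_le.1 hcross).2, mul_le_mul_of_nonneg_left hsum hσ,
    mul_le_mul_of_nonneg_right hδ_sq (sq_nonneg ‖ξ‖), mul_nonneg hσ (sq_nonneg ‖ξ‖),
    mul_nonneg hσ (sq_nonneg ‖ζ‖)]

lemma smul_apply_sub_smul_apply_le {r H : ℝ} (hG : 0 < G) (hr : 0 < r) {X Y : E →L[ℝ] E →L[ℝ] ℝ}
    {p q : E →L[ℝ] ℝ} {ξ ζ : E} (h : X ξ ξ + Y ζ ζ ≤ G / r ^ 2 * H) :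
    ((r ^ 2 / G) • (X + p.smulRight p)) ξ ξ - ((r ^ 2 / G) • (q.smulRight q - Y)) ζ ζ ≤
      H + G * ((r / G) • p) ξ ^ 2 - G * (-((r / G) • q)) ζ ^ 2 := by
  have hle := mul_le_mul_of_nonneg_left h (by positivity : 0 ≤ r ^ 2 / G)
  rw [← mul_assoc, div_mul_div_cancel₀ hG.ne', div_self (by positivity), one_mul] at hle
  simp only [_root_.smul_apply, _root_.add_apply, _root_.sub_apply, _root_.neg_apply,
    ContinuousLinearMap.smulRight_apply, smul_eq_mul]
  have hp : G * (r / G * p ξ) ^ 2 = r ^ 2 / G * (p ξ * p ξ) := by field_simp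
  have hq : G * (-(r / G * q ζ)) ^ 2 = r ^ 2 / G * (q ζ * q ζ) := by field_simp
  linarith

section Gradient

variable {L : ℝ} {z : E × E} {p q : E →L[ℝ] ℝ}

lemma abs_smul_apply_sub_le_of_norm_coprod_sub_le (hL : 0 < L) (hz : z ∈ penaltyDomain E)
    (h : ‖p.coprod q - fderiv ℝ (penalty L) z‖ ≤ σ * (penalty L z / 8 / ‖z.1 - z.2‖)) (v : E × E) :
    |(‖z.1 - z.2‖ / (penalty L z / 8)) * (p v.1 + q v.2) -
      (⟪penaltyDir z, v.1 - v.2⟫_ℝ + radialForm z v.1)| ≤ σ * ‖v‖ := by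
  have hr := norm_sub_pos_of_mem_penaltyDomain hz
  have hG : 0 < penalty L z / 8 := div_pos (penalty_pos hL z) (by norm_num)
  have hv := (p.coprod q - fderiv ℝ (penalty L) z).le_of_opNorm_le h v
  rw [_root_.sub_apply, ContinuousLinearMap.coprod_apply, fderiv_penalty_apply_eq L hz,
    Real.norm_eq_abs] at hv
  have hscale (s t : ℝ) : ‖z.1 - z.2‖ / (penalty L z / 8) * s - t =
      (‖z.1 - z.2‖ / (penalty L z / 8)) * (s - penalty L z / 8 / ‖z.1 - z.2‖ * t) := by
    rw [mul_sub, ← mul_assoc, div_mul_div_cancel₀ hG.ne', div_self hr.ne', one_mul]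
  rw [hscale, abs_mul, abs_of_pos (by positivity), ← le_div_iff₀' (by positivity)]
  exact hv.trans_eq (by field_simp)

lemma abs_smul_apply_sub_inner_le_of_norm_coprod_sub_le (hL : 0 < L) (hz : z ∈ penaltyDomain E)
    (h : ‖p.coprod q - fderiv ℝ (penalty L) z‖ ≤ σ * (penalty L z / 8 / ‖z.1 - z.2‖)) (ξ : E) :
    |((‖z.1 - z.2‖ / (penalty L z / 8)) • p) ξ - ⟪penaltyDir z, ξ⟫_ℝ| ≤
      (σ + 2 * penaltyRatio z) * ‖ξ‖ := by
  have hξ := abs_smul_apply_sub_le_of_norm_coprod_sub_le hL hz h (ξ, 0)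
  have hθ := abs_radialForm_apply_le hz ξ
  rw [map_zero, add_zero, sub_zero, Prod.norm_mk, norm_zero, max_eq_left (norm_nonneg ξ)] at hξ
  rw [_root_.smul_apply, smul_eq_mul]
  rw [abs_le] at *
  constructor <;> linarith

lemma abs_neg_smul_apply_sub_inner_le_of_norm_coprod_sub_le (hL : 0 < L)
    (hz : z ∈ penaltyDomain E)
    (h : ‖p.coprod q - fderiv ℝ (penalty L) z‖ ≤ σ * (penalty L z / 8 / ‖z.1 - z.2‖)) (ζ : E) :
    |(-((‖z.1 - z.2‖ / (penalty L z / 8)) • q)) ζ - ⟪penaltyDir z, ζ⟫_ℝ| ≤ σ * ‖ζ‖ := by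
  have hζ := abs_smul_apply_sub_le_of_norm_coprod_sub_le hL hz h (0, ζ)
  rw [map_zero, map_zero, zero_add, zero_sub, add_zero, inner_neg_right, sub_neg_eq_add,
    Prod.norm_mk, norm_zero, max_eq_right (norm_nonneg ζ)] at hζ
  rwa [_root_.neg_apply, _root_.smul_apply, smul_eq_mul, ← abs_neg, neg_sub', neg_neg,
    sub_neg_eq_add]

end Gradient

end Inner

variable {n : ℕ} [NeZero n] {a : Fin n → ℝ} {A B : En n →L[ℝ] En n →L[ℝ] ℝ} {e : En n} {G τ : ℝ}

/-- The matrix inequality satisfied by `A` and `B` up to an error `τ`, where `e` is a unit vector: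
the first two terms come from the Hessian of `penalty` and the terms with `G` from the square of
its gradient. -/
def PenaltyMatrixLE (e : En n) (G τ : ℝ) (A B : En n →L[ℝ] En n →L[ℝ] ℝ) : Prop :=
  ∀ ξ ζ, A ξ ξ - B ζ ζ ≤ ‖ξ - ζ‖ ^ 2 - 15 / 8 * ⟪e, ξ - ζ⟫_ℝ ^ 2 + G * ⟪e, ξ⟫_ℝ ^ 2 -
    G * ⟪e, ζ⟫_ℝ ^ 2 + τ * (‖ξ‖ ^ 2 + ‖ζ‖ ^ 2)

omit [NeZero n] in
lemma penaltyMatrixLE_of_hessianModel {P Q θ : En n →L[ℝ] ℝ} {δ σ : ℝ} (he : ‖e‖ = 1)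
    (hδ : 0 ≤ δ) (hδσ : δ ≤ σ) (hσ₁ : σ ≤ 1) (hθ : ∀ v, |θ v| ≤ σ * ‖v‖)
    (hP : ∀ v, |P v - ⟪e, v⟫_ℝ| ≤ σ * ‖v‖) (hQ : ∀ v, |Q v - ⟪e, v⟫_ℝ| ≤ σ * ‖v‖) (hG : 0 ≤ G)
    (hτ : (4 + 3 * G) * σ ≤ τ)
    (h : ∀ ξ ζ, A ξ ξ - B ζ ζ ≤ hessianModel e θ δ ξ ζ + G * P ξ ^ 2 - G * Q ζ ^ 2) :
    PenaltyMatrixLE e G τ A B := by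
  intro ξ ζ
  have hσ := hδ.trans hδσ
  have hPξ := (abs_le.1 (abs_apply_sq_sub_inner_sq_le he hσ hσ₁ (hP ξ))).2
  have hQζ := (abs_le.1 (abs_apply_sq_sub_inner_sq_le he hσ hσ₁ (hQ ζ))).1
  linarith [h ξ ζ, hessianModel_le he hδ hδσ hσ₁ hθ ξ ζ, mul_le_mul_of_nonneg_left hPξ hG,
    mul_le_mul_of_nonneg_left hQζ hG,
    mul_le_mul_of_nonneg_right hτ (by positivity : 0 ≤ ‖ξ‖ ^ 2 + ‖ζ‖ ^ 2)]

namespace PenaltyMatrixLE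

omit [NeZero n] in
lemma apply_self_le (h : PenaltyMatrixLE e G τ A B) (v : En n) :
    A v v ≤ B v v + 2 * τ * ‖v‖ ^ 2 := by
  have := h v v
  simp only [sub_self, norm_zero, inner_zero_right] at this
  linarith

omit [NeZero n] in
lemma neg_norm_sq_le (h : PenaltyMatrixLE e G τ A B) (hG : 0 ≤ G) (v : En n) :
    -(1 + τ) * ‖v‖ ^ 2 ≤ B v v := by
  have := h 0 v
  simp only [zero_sub, norm_neg, inner_neg_right, norm_zero, inner_zero_right, map_zero] at this
  nlinarith [mul_nonneg hG (sq_nonneg ⟪e, v⟫_ℝ)]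

omit [NeZero n] in
lemma le_norm_sq (h : PenaltyMatrixLE e G τ A B) (he : ‖e‖ = 1) (v : En n) :
    A v v ≤ (1 + τ + max (G - 15 / 8) 0) * ‖v‖ ^ 2 := by
  have := h v 0
  simp only [sub_zero, norm_zero, inner_zero_right, map_zero] at this
  have hsq : ⟪e, v⟫_ℝ ^ 2 ≤ ‖v‖ ^ 2 := by
    have := abs_le.1 (abs_inner_le_of_norm_eq_one he v)
    exact sq_le_sq' this.1 this.2
  have hmax : (G - 15 / 8) * ⟪e, v⟫_ℝ ^ 2 ≤ max (G - 15 / 8) 0 * ‖v‖ ^ 2 :=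
    mul_le_mul (le_max_left _ _) hsq (sq_nonneg _) (le_max_right _ _)
  linarith

-- If `λ₁(A)` is not already below `λ₁(B)`, then testing with `(e, -e)` makes `B e e` large.
lemma exists_sortedEig_add_le (h : PenaltyMatrixLE e G τ A B) (he : ‖e‖ = 1) (hG : 0 ≤ G)
    (hτ : τ ≤ 1 / 32) (hA : ∀ u v, A u v = A v u) (hB : ∀ u v, B u v = B v u) :
    ∃ j, (j = 0 ∨ j = lastIdx n) ∧
      sortedEig (formMatrix A) j + 1 / 8 ≤ sortedEig (formMatrix B) j := by
  rcases le_or_gt (A e e) (-5 / 4) with hAe | hAe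
  · refine ⟨0, .inl rfl, ?_⟩
    have := sortedEig_zero_le hA he
    have := le_sortedEig hB (h.neg_norm_sq_le hG) 0
    linarith
  · refine ⟨lastIdx n, .inr rfl, ?_⟩
    have hAn := sortedEig_le hA (h.le_norm_sq he) (lastIdx n)
    have hBn := le_sortedEig_lastIdx hB he
    have hee : ⟪e, e⟫_ℝ = 1 := by rw [real_inner_self_eq_norm_sq, he, one_pow]
    have hopp := h e (-e)
    have hzero := h 0 e
    rw [sub_neg_eq_add, ← two_smul ℝ e] at hopp
    simp only [norm_smul, norm_neg, he, inner_neg_right, inner_smul_right, hee, map_neg,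
      _root_.neg_apply, neg_neg, zero_sub, norm_zero, inner_zero_right, map_zero,
      Real.norm_ofNat] at hopp hzero
    rcases max_cases (G - 15 / 8) 0 with ⟨hmax, _⟩ | ⟨hmax, _⟩ <;> linarith

end PenaltyMatrixLE

lemma exists_Ma_lt_of_penaltyMatrixLE (ha : ClassA a) :
    ∃ τ > 0, ∀ {e : En n} {G : ℝ} {A B : En n →L[ℝ] En n →L[ℝ] ℝ},
      PenaltyMatrixLE e G τ A B → ‖e‖ = 1 → 0 ≤ G → (∀ u v, A u v = A v u) →
      (∀ u v, B u v = B v u) → Ma a (formMatrix A) < Ma a (formMatrix B) := by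
  obtain ⟨ha₀, ha₁, han⟩ := ha
  set S := ∑ i, a i
  have hS : 0 ≤ S := Finset.sum_nonneg fun i _ => ha₀ i
  set μ := min (a 0) (a (lastIdx n))
  have hμ : 0 < μ := lt_min ha₁ han
  have hτ : 0 < min (1 / 32) (μ / (16 * (S + 1))) := by positivity
  refine ⟨_, hτ, fun {e G A B} h he hG hA hB => ?_⟩
  have hτS : min (1 / 32) (μ / (16 * (S + 1))) * (16 * (S + 1)) ≤ μ :=
    (le_div_iff₀ (by positivity)).1 (min_le_right _ _)
  obtain ⟨j, hj, hgap⟩ := h.exists_sortedEig_add_le he hG (min_le_left _ _) hA hB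
  have hle := Ma_formMatrix_add_gap_le ha₀ hA hB (by positivity) h.apply_self_le hgap
  have hμj : μ ≤ a j := by
    rcases hj with rfl | rfl
    exacts [min_le_left _ _, min_le_right _ _]
  linarith

lemma mul_le_sum_of_Ma_nonpos (ha : ∀ i, 0 ≤ a i) (hB : ∀ u v, B u v = B v u)
    (hB₁ : ∀ v, -‖v‖ ^ 2 ≤ B v v) (he : ‖e‖ = 1) {g : ℝ} (hg : g ≤ B e e + 1)
    (hMa : Ma a (formMatrix B) ≤ 0) : a (lastIdx n) * g ≤ ∑ i, a i := by
  have hlow (i : Fin n) : 0 ≤ sortedEig (formMatrix B) i + 1 := by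
    linarith [le_sortedEig hB (t := -1) (by simpa using hB₁) i]
  calc a (lastIdx n) * g ≤ a (lastIdx n) * (sortedEig (formMatrix B) (lastIdx n) + 1) := by
        gcongr
        · exact ha _
        · linarith [le_sortedEig_lastIdx hB he]
    _ ≤ ∑ i, a i * (sortedEig (formMatrix B) i + 1) :=
        Finset.single_le_sum (f := fun i => a i * (sortedEig (formMatrix B) i + 1))
          (fun i _ => mul_nonneg (ha i) (hlow i)) (Finset.mem_univ _)
    _ = Ma a (formMatrix B) + ∑ i, a i := by
        simp only [Ma, mul_add, mul_one, Finset.sum_add_distrib]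
    _ ≤ ∑ i, a i := add_le_of_nonpos_left hMa

lemma mul_div_four_le_sum {P Q θ : En n →L[ℝ] ℝ} {δ : ℝ} (ha : ∀ i, 0 ≤ a i)
    (hB : ∀ u v, B u v = B v u) (he : ‖e‖ = 1) (hG : 0 ≤ G)
    (hQ : ∀ v, |Q v - ⟪e, v⟫_ℝ| ≤ 1 / 2 * ‖v‖)
    (h : ∀ ξ ζ, A ξ ξ - B ζ ζ ≤ hessianModel e θ δ ξ ζ + G * P ξ ^ 2 - G * Q ζ ^ 2)
    (hMa : Ma a (formMatrix B) ≤ 0) : a (lastIdx n) * (G / 4) ≤ ∑ i, a i := by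
  have hB_le (v : En n) : -B v v ≤ ‖v‖ ^ 2 - 15 / 8 * ⟪e, v⟫_ℝ ^ 2 - G * Q v ^ 2 := by
    simpa only [map_zero, zero_sub, hessianModel_zero_left, zero_pow two_ne_zero, mul_zero,
      add_zero] using h 0 v
  refine mul_le_sum_of_Ma_nonpos ha hB (fun v => ?_) he ?_ hMa
  · linarith [hB_le v, sq_nonneg ⟪e, v⟫_ℝ, mul_nonneg hG (sq_nonneg (Q v))]
  · have hQe := hQ e
    have hBe := hB_le e
    rw [real_inner_self_eq_norm_sq, he] at hQe hBe
    have hQ_sq : 1 / 4 ≤ Q e ^ 2 := by nlinarith [(abs_le.1 hQe).1]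
    linarith [mul_le_mul_of_nonneg_left hQ_sq hG]

lemma exists_Ma_pos_of_hessianModel (ha : ClassA a) :
    ∃ C > 0, ∃ σ > 0, ∀ {e : En n} {P Q θ : En n →L[ℝ] ℝ} {δ G : ℝ}
      {A B : En n →L[ℝ] En n →L[ℝ] ℝ}, ‖e‖ = 1 → 0 ≤ δ → 0 ≤ G → (G ≤ C → δ ≤ σ) →
      (∀ v, |θ v| ≤ 2 * δ * ‖v‖) → (∀ v, |P v - ⟪e, v⟫_ℝ| ≤ (σ + 2 * δ) * ‖v‖) →
      (∀ v, |Q v - ⟪e, v⟫_ℝ| ≤ σ * ‖v‖) →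
      (∀ ξ ζ, A ξ ξ - B ζ ζ ≤ hessianModel e θ δ ξ ζ + G * P ξ ^ 2 - G * Q ζ ^ 2) →
      (∀ u v, A u v = A v u) → (∀ u v, B u v = B v u) →
      0 ≤ Ma a (formMatrix A) → 0 < Ma a (formMatrix B) := by
  obtain ⟨τ, hτ, hlt⟩ := exists_Ma_lt_of_penaltyMatrixLE ha
  have han := ha.2.2
  set C := 4 * (∑ i, a i) / a (lastIdx n)
  have hC : 0 < C := div_pos (mul_pos four_pos
    (Finset.sum_pos' (fun i _ => ha.1 i) ⟨0, Finset.mem_univ _, ha.2.1⟩)) han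
  obtain ⟨σ, hσ, hσ₁, hστ⟩ : ∃ σ > 0, 3 * σ ≤ 1 ∧ (4 + 3 * C) * (3 * σ) ≤ τ := by
    refine ⟨min 1 (τ / (4 + 3 * C)) / 3, by positivity, ?_, ?_⟩ <;>
      rw [mul_div_cancel₀ _ three_ne_zero]
    exacts [min_le_left _ _, (le_div_iff₀' (by positivity)).1 (min_le_right _ _)]
  refine ⟨C, hC, σ, hσ, fun {e P Q θ δ G A B} he hδ hG hGδ hθ hP hQ hAB hA hB hMA => ?_⟩
  by_contra! hMB
  have hGC : G ≤ C := by
    have := mul_div_four_le_sum ha.1 hB he hG (fun v => (hQ v).trans (by gcongr; linarith)) hAB hMB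
    rw [le_div_iff₀' han]
    linarith
  have hδσ := hGδ hGC
  have hτ' : (4 + 3 * G) * (3 * σ) ≤ τ := le_trans (by gcongr) hστ
  exact (hlt (penaltyMatrixLE_of_hessianModel he hδ (by linarith) hσ₁
    (fun v => (hθ v).trans (by gcongr; linarith)) (fun v => (hP v).trans (by gcongr; linarith))
    (fun v => (hQ v).trans (by gcongr; linarith)) hG hτ' hAB) he hG hA hB).not_ge (hMB.trans hMA)

-- A large `L` makes `penaltyRatio` small wherever `penalty` is at most a given constant.
theorem exists_forall_Ma_pos (ha : ClassA a) :
    ∃ L > 0, ∃ σ > 0, ∀ {z : En n × En n} {p q : En n →L[ℝ] ℝ} {X Y : En n →L[ℝ] En n →L[ℝ] ℝ},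
      z ∈ penaltyDomain (En n) → (∀ u v, X u v = X v u) → (∀ u v, Y u v = Y v u) →
      (∀ ξ ζ, X ξ ξ + Y ζ ζ ≤ fderiv ℝ (fderiv ℝ (penalty L)) z (ξ, ζ) (ξ, ζ)) →
      ‖p.coprod q - fderiv ℝ (penalty L) z‖ ≤ σ * (penalty L z / 8 / ‖z.1 - z.2‖) →
      0 ≤ Ma a (formMatrix (X + p.smulRight p)) → 0 < Ma a (formMatrix (q.smulRight q - Y)) := by
  obtain ⟨C, hC, σ, hσ, hpos⟩ := exists_Ma_pos_of_hessianModel ha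
  set κ := min σ 1
  have hκ : 0 < κ := lt_min hσ one_pos
  set L := 8 * C / κ
  have hL : 0 < L := by positivity
  refine ⟨L, hL, σ, hσ, fun {z p q X Y} hz hX hY hXY hpq hMX => ?_⟩
  have hr := norm_sub_pos_of_mem_penaltyDomain hz
  have hG : 0 < penalty L z / 8 := div_pos (penalty_pos hL z) (by norm_num)
  set k := ‖z.1 - z.2‖ ^ 2 / (penalty L z / 8)
  have hk : 0 < k := by positivity
  have hδ (hGC : penalty L z / 8 ≤ C) : penaltyRatio z ≤ σ := by
    calc penaltyRatio z ≤ (8 * C / L) ^ 8 := penaltyRatio_le_of_penalty_le hL hz (by linarith)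
      _ = κ ^ 8 := by rw [div_div_cancel₀ (by positivity)]
      _ ≤ κ := pow_le_of_le_one hκ.le (min_le_right _ _) (by norm_num)
      _ ≤ σ := min_le_left _ _
  have hX' (u v : En n) : (X + p.smulRight p) u v = (X + p.smulRight p) v u := by
    simp only [_root_.add_apply, ContinuousLinearMap.smulRight_apply, _root_.smul_apply,
      smul_eq_mul, hX u v, mul_comm (p u)]
  have hY' (u v : En n) : (q.smulRight q - Y) u v = (q.smulRight q - Y) v u := by
    simp only [_root_.sub_apply, ContinuousLinearMap.smulRight_apply, _root_.smul_apply,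
      smul_eq_mul, hY u v, mul_comm (q u)]
  have hMB := hpos (norm_penaltyDir hz) (penaltyRatio_nonneg hz) hG.le hδ
    (abs_radialForm_apply_le hz) (abs_smul_apply_sub_inner_le_of_norm_coprod_sub_le hL hz hpq)
    (abs_neg_smul_apply_sub_inner_le_of_norm_coprod_sub_le hL hz hpq)
    (fun ξ ζ => smul_apply_sub_smul_apply_le hG hr
      ((hXY ξ ζ).trans (fderiv_fderiv_penalty_le hL hz ξ ζ)))
    (fun u v => congrArg (k * ·) (hX' u v)) (fun u v => congrArg (k * ·) (hY' u v))
    (by rw [Ma_formMatrix_smul a hX' hk.le]; exact mul_nonneg hk.le hMX)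
  rw [Ma_formMatrix_smul a hY' hk.le] at hMB
  exact pos_of_mul_pos_right hMB hk.le

end MatrixInequality

section Liouville

variable {n : ℕ} [NeZero n] {a : Fin n → ℝ} {u : En n → ℝ}

theorem exists_log_sub_log_le_penalty (ha : ClassA a) :
    ∃ L > 0, ∀ {u : En n → ℝ}, Continuous u → (∀ x, 1 ≤ u x) → IsJetSubsol a u →
      IsJetSubsol (a ∘ Fin.rev) (-u) → ∀ z ∈ penaltyDomain (En n),
        Real.log (u z.1) - Real.log (u z.2) ≤ penalty L z := by
  obtain ⟨L, hL, σ, hσ, hpos⟩ := exists_forall_Ma_pos ha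
  refine ⟨L, hL, fun {u} hu hu₁ hsub hsup => ?_⟩
  by_contra! ⟨z₀, hz₀, hlt₀⟩
  have hu₀ (x : En n) : 0 < u x := one_pos.trans_le (hu₁ x)
  have hw : Continuous fun x => Real.log (u x) := hu.log fun x => (hu₀ x).ne'
  set m := (Real.log (u z₀.1) - Real.log (u z₀.2) - penalty L z₀) / 2 with hm_def
  have hm : 0 < m := half_pos (sub_pos.2 hlt₀)
  set K := doublingSet L m fun x => Real.log (u x)
  have hK : IsCompact K := isCompact_doublingSet hw (fun x => Real.log_nonneg (hu₁ x)) hL hm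
  have hgrad : ContinuousOn (fun z : En n × En n => σ * (penalty L z / 8 / ‖z.1 - z.2‖)) K :=
    continuousOn_const.mul ((((continuousOn_penalty L).mono fun _ h => h.1).div_const 8).div
      (by fun_prop) fun z hz => (norm_sub_pos_of_mem_penaltyDomain hz.1).ne')
  obtain ⟨ε, hε, hεle⟩ := hK.exists_forall_le' hgrad (a := 0) fun z hz =>
    mul_pos hσ (div_pos (div_pos (penalty_pos hL z) (by norm_num))
      (norm_sub_pos_of_mem_penaltyDomain hz.1))
  obtain ⟨z, hz, x, y, p, q, X, Y, hX, hY, hpq, hXY⟩ :=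
    exists_isSuperjet_of_isCompact (Φ := penalty L) hw hw.neg hK
      (fun z hz => contDiffAt_penalty L hz.1) (show z₀ ∈ K from ⟨hz₀, by linarith⟩)
      (fun z hz => by
        simp only [Pi.neg_apply, ← sub_eq_add_neg]
        linarith [le_of_mem_doublingSet_sdiff_interior hw hz]) hε
  exact (hpos hz.1 hX.symm hY.symm hXY (hpq.le.trans (hεle z hz))
    (hsub.Ma_nonneg_of_log hu₀ hX)).not_ge (hsup.Ma_nonpos_of_neg_log hu₀ hY)

lemma tendsto_penaltyRatio_smul {E : Type*} [NormedAddCommGroup E] [NormedSpace ℝ E] (z : E × E) :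
    Tendsto (fun t : ℝ => penaltyRatio (t • z)) (𝓝 0) (𝓝 0) := by
  have hcont : ContinuousAt (fun t : ℝ => penaltyRatio (t • z)) 0 := by
    unfold penaltyRatio
    exact ContinuousAt.div (by fun_prop) (by fun_prop) (by simp)
  simpa [penaltyRatio] using hcont.tendsto

-- The Hölder estimate is applied to `u (R • ·)`, where `R = t⁻¹ → ∞`.
lemma apply_le_of_isJetSubsol (ha : ClassA a) (hu : Continuous u) (hu₁ : ∀ x, 1 ≤ u x)
    (hsub : IsJetSubsol a u) (hsup : IsJetSubsol (a ∘ Fin.rev) (-u)) (x y : En n) :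
    u x ≤ u y := by
  obtain ⟨L, -, hlog⟩ := exists_log_sub_log_le_penalty ha
  by_contra! hlt
  have hy₀ : 0 < u y := one_pos.trans_le (hu₁ y)
  have hA : 0 < Real.log (u x) - Real.log (u y) := sub_pos.2 (Real.log_lt_log hy₀ hlt)
  have hball : ∀ᶠ t : ℝ in 𝓝[>] 0, ‖t • x‖ < 1 :=
    nhdsWithin_le_nhds <|
      (Continuous.tendsto' (by fun_prop) 0 0 (by simp)).eventually_lt_const one_pos
  have hpow : ∀ᶠ t : ℝ in 𝓝[>] 0, (Real.log (u x) - Real.log (u y)) ^ 8 ≤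
      L ^ 8 * penaltyRatio (t • (x, y)) := by
    filter_upwards [self_mem_nhdsWithin, hball] with t (ht : 0 < t) htx
    have hz : t • (x, y) ∈ penaltyDomain (En n) :=
      ⟨fun h => hlt.ne' (congrArg u (smul_right_injective _ ht.ne' h)), htx⟩
    have hle := hlog (u := fun v => u (t⁻¹ • v)) (by fun_prop) (fun _ => hu₁ _)
      (hsub.comp_smul (inv_pos.2 ht)) (hsup.comp_smul (inv_pos.2 ht)) _ hz
    simp only [Prod.smul_mk, inv_smul_smul₀ ht.ne'] at hle
    rw [← penalty_pow_eight L hz]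
    exact pow_le_pow_left₀ hA.le hle 8
  have hlim : Tendsto (fun t : ℝ => L ^ 8 * penaltyRatio (t • (x, y))) (𝓝[>] 0) (𝓝 0) := by
    simpa using ((tendsto_penaltyRatio_smul (x, y)).mono_left nhdsWithin_le_nhds).const_mul (L ^ 8)
  exact (pow_pos hA 8).not_ge (ge_of_tendsto hlim hpow)

lemma eq_of_isJetSubsol (ha : ClassA a) (hu : Continuous u) {M : ℝ} (hM : ∀ x, M ≤ u x)
    (hsub : IsJetSubsol a u) (hsup : IsJetSubsol (a ∘ Fin.rev) (-u)) (x y : En n) : u x = u y := by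
  have hneg : (fun x => (-u) x + -(1 - M)) = -fun x => u x + (1 - M) :=
    funext fun x => (neg_add _ _).symm
  have hle (x y : En n) : u x ≤ u y :=
    (add_le_add_iff_right (1 - M)).1 <| apply_le_of_isJetSubsol ha (by fun_prop)
      (fun x => by linarith [hM x]) (hsub.add_const _) (hneg ▸ hsup.add_const _) x y
  exact (hle x y).antisymm (hle y x)

lemma rev_zero_eq_lastIdx : (0 : Fin n).rev = lastIdx n := by
  ext
  simp [lastIdx, Fin.val_rev]

lemma ClassA.comp_rev (ha : ClassA a) : ClassA (a ∘ Fin.rev) := by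
  refine ⟨fun i => ha.1 _, ?_, ?_⟩
  · simpa only [Function.comp_apply, rev_zero_eq_lastIdx] using ha.2.2
  · simpa only [Function.comp_apply, ← rev_zero_eq_lastIdx, Fin.rev_rev] using ha.2.1

end Liouville

/-- **Liouville theorem (Theorem 7.1).** Let `M_a ∈ 𝒜`. An entire viscosity solution of
`M_a(D²u) = 0` on `ℝⁿ` which is bounded above or bounded below is constant. -/
theorem liouville (n : ℕ) [NeZero n] (a : Fin n → ℝ) (ha : ClassA a)
    (u : En n → ℝ) (hu : Continuous u)
    (hsub : IsViscSubsol a Set.univ (fun _ => 0) u)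
    (hsup : IsViscSupersol a Set.univ (fun _ => 0) u)
    (hbdd : (∃ M, ∀ x, u x ≤ M) ∨ (∃ M, ∀ x, M ≤ u x)) :
    ∃ k : ℝ, ∀ x, u x = k := by
  have hjet := hsub.isJetSubsol ha.1
  have hjet' := hsup.neg.isJetSubsol ha.comp_rev.1
  refine ⟨u 0, fun x => ?_⟩
  rcases hbdd with ⟨M, hM⟩ | ⟨M, hM⟩
  · have hrev : (a ∘ Fin.rev) ∘ Fin.rev = a := by
      rw [Function.comp_assoc, Fin.rev_involutive.comp_self, Function.comp_id]
    exact neg_injective <| eq_of_isJetSubsol ha.comp_rev hu.neg (fun x => neg_le_neg (hM x)) hjet'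
      (by rwa [hrev, neg_neg]) x 0
  · exact eq_of_isJetSubsol ha hu hM hjet hjet' x 0
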